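/- arXiv:2004.14726 — 5 statements merged into one kernel-verified Lean document; each statement's English description precedes it below -/
import Mathlib

section
/- Let s ≥ 1 be an integer, q₀ = 2^s and q = 2q₀². Let H be the numerical semigroup generated by g₀ = q²−q+1, g₁ = q²−2q₀+1, g₂ = q²−q₀+1, g₃ = q², g₄ = q²+1, f_i = (i+1)q₀g₀ − i·g₄ − 1 for i = 0,…,2q₀−2, and h_j = (2j+1)q₀g₀ − j·g₄ − q₀ for j = 0,…,q₀−2. Let φ : {0,…,q²−q} → ℕ be defined by: for 0 ≤ i ≤ q(q−2)/2, writing i = lq + kq₀ + j with 0 ≤ j ≤ q₀−1, 0 ≤ k ≤ 2q₀−1, l ≥ 0, set φ(i) = l if j = 0 and k = 0; φ(i) = l + 1 + max{q − q₀(k+2l+2), 0} if j = 0 and k ≠ 0; φ(i) = l + 1 + max{q − q₀(⌈k/2⌉+j+l+1), 0} if j ≠ 0; and for q(q−2)/2 + 1 ≤ i ≤ q²−q, writing q² − q − i = lq + kq₀ + j with the same ranges, set φ(i) = q − l − 1 − max{q − q₀(k+2l+1), 0} if j = q₀−1 and φ(i) = q − l − 1 − max{q − q₀(⌈k/2⌉+j+l+1),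 0} if j ≠ q₀−1. Then the Apéry set Ap(H) = { z ∈ H : z − g₀ ∉ H } equals { φ(i)·g₀ + i : 0 ≤ i ≤ q² − q } = { φ(i)·g₀ + i : 0 ≤ i ≤ g₀ − 1 }. -/
/-!
Modulo `g₀` we have `g₄ ≡ q`. Every element of `H` has the form
`b g₄ + d q₀ g₀ - x - y q₀ + e g₀` with `e ≥ 0`, where the coefficients satisfy inequalities that
hold for each generator and are preserved under addition; conversely, such combinations with small
`d` lie in `H`. If `c g₀ + i` is written in this form, then `i + t g₀ = b q - x - y q₀` for an
integer `t` with `b + d q₀ + t ≤ c`, and `φ i` is the least value that `b + d q₀ + t` can take.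
For `t ≥ 1` and `t ≤ -2` it is at least `q - 1 ≥ φ i`. For `t = 0` and `t = -1` one compares the
digits of `i` with `b`, `x`, `y`; lower bounds for the two carries that occur give lower bounds for
`b` and `d`. The case `t = -1` reduces to a digit comparison through `g₀ = (q - 1) q + 1`.
-/

namespace AperySet

theorem apery_eq_of_isLeast {H : AddSubmonoid ℕ} {g : ℕ} (hg : g ∈ H) {φ : ℕ → ℕ}
    (hφ : ∀ i < g, IsLeast {c | c * g + i ∈ H} (φ i)) :
    {z | z ∈ H ∧ ¬∃ w, w ∈ H ∧ z = w + g} = {x | ∃ i < g, x = φ i * g + i} := by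
  ext z
  constructor
  · rintro ⟨hz, hmin⟩
    have hpos : 0 < g := Nat.pos_of_ne_zero fun h ↦ hmin ⟨z, hz, by omega⟩
    have hlt : z % g < g := Nat.mod_lt z hpos
    have hdiv : z / g * g + z % g = z := Nat.div_add_mod' z g
    have hle : φ (z % g) ≤ z / g := (hφ _ hlt).2 (by simpa only [Set.mem_ofPred_eq, hdiv] using hz)
    refine ⟨z % g, hlt, ?_⟩
    obtain heq | ⟨e, he⟩ := hle.eq_or_lt.imp_right Nat.exists_eq_add_of_lt
    · rw [heq, hdiv]
    · refine absurd ⟨_, H.add_mem (hφ _ hlt).1 (H.nsmul_mem hg e), ?_⟩ hmin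
      conv_lhs => rw [← hdiv, he]
      rw [smul_eq_mul]
      ring
  · rintro ⟨i, hi, rfl⟩
    refine ⟨(hφ i hi).1, ?_⟩
    rintro ⟨w, hw, hwz⟩
    obtain ⟨c, hc⟩ : ∃ c, φ i = c + 1 :=
      Nat.exists_eq_add_one_of_ne_zero fun h ↦ by rw [h] at hwz; omega
    have hwc : w = c * g + i := by rw [hc, Nat.succ_mul] at hwz; omega
    subst hwc
    have : φ i ≤ c := (hφ i hi).2 hw
    omega

theorem exists_mixedRadix_digits {a b : ℕ} (ha : 0 < a) (hb : 0 < b) (n : ℕ) :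
    ∃ l k j, n = l * (a * b) + k * b + j ∧ k < a ∧ j < b := by
  refine ⟨n / b / a, n / b % a, n % b, ?_, Nat.mod_lt _ ha, Nat.mod_lt _ hb⟩
  calc n = n / b * b + n % b := (Nat.div_add_mod' n b).symm
    _ = (n / b / a * a + n / b % a) * b + n % b := by rw [Nat.div_add_mod' (n / b) a]
    _ = _ := by ring

theorem nonneg_of_neg_lt_mul {p a : ℤ} (hp : 0 ≤ p) (h : -p < p * a) : 0 ≤ a := by
  have : p * (-1) < p * a := by linarith
  have := lt_of_mul_lt_mul_left this hp
  omega

theorem mul_mem_of_nonneg {K : AddSubmonoid ℤ} {n z : ℤ} (hn : 0 ≤ n) (hz : z ∈ K) :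
    n * z ∈ K := by
  lift n to ℕ using hn
  simpa using K.nsmul_mem hz n

theorem natCast_two_mul_sq_sub (p E : ℕ) :
    ((2 * p ^ 2 - p * E : ℕ) : ℤ) = p * max (2 * p - E : ℤ) 0 := by
  have hfactor : 2 * p ^ 2 - p * E = p * (2 * p - E) := by rw [Nat.mul_sub]; ring_nf
  have hsub : ((2 * p - E : ℕ) : ℤ) = max (2 * p - E : ℤ) 0 := by omega
  rw [hfactor, Nat.cast_mul, hsub]

section Integer

variable {p q l k j b d x y : ℤ}

/-- The generators of `H`, with `p` for `q₀`, embedded in `ℤ` so that differences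
are not truncated. -/
def generators (p q : ℤ) : Set ℤ :=
  {q ^ 2 - q + 1, q ^ 2 - 2 * p + 1, q ^ 2 - p + 1, q ^ 2, q ^ 2 + 1} ∪
    {x | ∃ i, 0 ≤ i ∧ i + 2 ≤ 2 * p ∧
      x = (i + 1) * p * (q ^ 2 - q + 1) - i * (q ^ 2 + 1) - 1} ∪
    {x | ∃ i, 0 ≤ i ∧ i + 2 ≤ p ∧
      x = (2 * i + 1) * p * (q ^ 2 - q + 1) - i * (q ^ 2 + 1) - p}

/-- The semigroup `H`, embedded in `ℤ`. -/
def semigroup (p q : ℤ) : AddSubmonoid ℤ := AddSubmonoid.closure (generators p q)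

/-- Additive constraints satisfied by the coefficients of each generator, hence of each element
of `H`, when written as `combination p q b d x y + e * g₀`. The coefficient `b` may be negative. -/
structure Admissible (b d x y : ℤ) : Prop where
  d_nonneg : 0 ≤ d
  x_nonneg : 0 ≤ x
  y_nonneg : 0 ≤ y
  le_two_mul : 2 * x + y ≤ 2 * b + 2 * d
  x_pos_or : 1 ≤ x ∨ 2 * x + y ≤ 2 * b + d ∧ (d = 0 ∨ 1 ≤ y)

/-- The integer `b * g₄ + d * q₀ * g₀ - x - y * q₀`, where `g₄ = q² + 1` and `g₀ = q² - q + 1`. -/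
def combination (p q b d x y : ℤ) : ℤ :=
  b * (q ^ 2 + 1) + d * p * (q ^ 2 - q + 1) - x - y * p

theorem Admissible.add {b' d' x' y' : ℤ} (h : Admissible b d x y)
    (h' : Admissible b' d' x' y') : Admissible (b + b') (d + d') (x + x') (y + y') := by
  obtain ⟨hd, hx, hy, hle, hor⟩ := h
  obtain ⟨hd', hx', hy', hle', hor'⟩ := h'
  constructor <;> omega

theorem exists_admissible_of_mem_generators {n : ℤ} (hn : n ∈ generators p q) :
    ∃ b d x y e, Admissible b d x y ∧ 0 ≤ e ∧
      n = combination p q b d x y + e * (q ^ 2 - q + 1) := by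
  rcases hn with ((rfl | rfl | rfl | rfl | rfl) | ⟨i, hi, -, rfl⟩) | ⟨i, hi, -, rfl⟩
  · exact ⟨0, 0, 0, 0, 1, by constructor <;> omega, by omega, by unfold combination; ring⟩
  · exact ⟨1, 0, 0, 2, 0, by constructor <;> omega, by omega, by unfold combination; ring⟩
  · exact ⟨1, 0, 0, 1, 0, by constructor <;> omega, by omega, by unfold combination; ring⟩
  · exact ⟨1, 0, 1, 0, 0, by constructor <;> omega, by omega, by unfold combination; ring⟩
  · exact ⟨1, 0, 0, 0, 0, by constructor <;> omega, by omega, by unfold combination; ring⟩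
  · exact ⟨-i, i + 1, 1, 0, 0, by constructor <;> omega, by omega, by unfold combination; ring⟩
  · exact ⟨-i, 2 * i + 1, 0, 1, 0, by constructor <;> omega, by omega,
      by unfold combination; ring⟩

theorem exists_admissible_of_mem {n : ℤ} (hn : n ∈ semigroup p q) :
    ∃ b d x y e, Admissible b d x y ∧ 0 ≤ e ∧
      n = combination p q b d x y + e * (q ^ 2 - q + 1) := by
  induction hn using AddSubmonoid.closure_induction with
  | mem n hn => exact exists_admissible_of_mem_generators hn
  | zero => exact ⟨0, 0, 0, 0, 0, by constructor <;> omega, le_rfl, by simp [combination]⟩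
  | add m n _ _ hm hn =>
    obtain ⟨b, d, x, y, e, h, he, rfl⟩ := hm
    obtain ⟨b', d', x', y', e', h', he', rfl⟩ := hn
    exact ⟨_, _, _, _, e + e', h.add h', by omega, by unfold combination; ring⟩

theorem combination_zero_mem (hx : 0 ≤ x) (hy : 0 ≤ y)
    (hxy : 2 * x + y ≤ 2 * b) : combination p q b 0 x y ∈ semigroup p q := by
  have hgen (z : ℤ) (hz : z ∈ generators p q) (n : ℤ) (hn : 0 ≤ n) : n * z ∈ semigroup p q :=
    mul_mem_of_nonneg hn (AddSubmonoid.subset_closure hz)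
  have hg₁ := hgen (q ^ 2 - 2 * p + 1) (by simp [generators]) (y / 2) (by omega)
  have hg₂ := hgen (q ^ 2 - p + 1) (by simp [generators]) (y % 2) (by omega)
  have hg₃ := hgen (q ^ 2) (by simp [generators]) x hx
  have hg₄ := hgen (q ^ 2 + 1) (by simp [generators]) (b - x - y / 2 - y % 2) (by omega)
  convert add_mem (add_mem (add_mem hg₁ hg₂) hg₃) hg₄ using 1
  rw [combination]
  linear_combination (-p) * (Int.mul_ediv_add_emod y 2).symm

theorem combination_mem_of_x_pos (hd0 : 0 ≤ d) (hd : d ≤ 2 * p - 1)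
    (hx : 1 ≤ x) (hy : 0 ≤ y) (hle : 2 * x + y ≤ 2 * b + 2 * d) :
    combination p q b d x y ∈ semigroup p q := by
  obtain rfl | hd1 := hd0.eq_or_lt
  · exact combination_zero_mem (by omega) hy (by omega)
  · have hf : d * p * (q ^ 2 - q + 1) - (d - 1) * (q ^ 2 + 1) - 1 ∈ semigroup p q :=
      AddSubmonoid.subset_closure (.inl (.inr ⟨d - 1, by omega, by omega, by ring⟩))
    have hrest : combination p q (b + d - 1) 0 (x - 1) y ∈ semigroup p q :=
      combination_zero_mem (by omega) hy (by omega)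
    convert add_mem hf hrest using 1
    unfold combination
    ring

theorem combination_mem_of_odd {m : ℤ} (hm : 0 ≤ m) (hmp : m + 2 ≤ p)
    (hx : 0 ≤ x) (hy : 1 ≤ y) (hle : 2 * x + y ≤ 2 * b + (2 * m + 1)) :
    combination p q b (2 * m + 1) x y ∈ semigroup p q := by
  have hh : (2 * m + 1) * p * (q ^ 2 - q + 1) - m * (q ^ 2 + 1) - p ∈ semigroup p q :=
    AddSubmonoid.subset_closure (.inr ⟨m, hm, hmp, rfl⟩)
  have hrest : combination p q (b + m) 0 x (y - 1) ∈ semigroup p q :=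
    combination_zero_mem hx (by omega) (by omega)
  convert add_mem hh hrest using 1
  unfold combination
  ring

theorem combination_mem_of_y_pos (hd0 : 0 ≤ d) (hd : d ≤ 2 * p - 2)
    (hx : 0 ≤ x) (hy : 1 ≤ y) (hle : 2 * x + y ≤ 2 * b + d) :
    combination p q b d x y ∈ semigroup p q := by
  obtain rfl | hd1 := hd0.eq_or_lt
  · exact combination_zero_mem hx (by omega) (by omega)
  obtain ⟨m, rfl | rfl⟩ : ∃ m, d = 2 * m + 1 ∨ d = 2 * m + 2 := ⟨(d - 1) / 2, by omega⟩
  · exact combination_mem_of_odd (by omega) (by omega) hx hy hle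
  obtain rfl | hy2 := hy.eq_or_lt
  · have hodd : combination p q b (2 * m + 1) x 1 ∈ semigroup p q :=
      combination_mem_of_odd (by omega) (by omega) hx le_rfl (by omega)
    have hg₀ : p * (q ^ 2 - q + 1) ∈ semigroup p q :=
      mul_mem_of_nonneg (by omega) (AddSubmonoid.subset_closure (by simp [generators]))
    convert add_mem hodd hg₀ using 1
    unfold combination
    ring
  · have hodd : combination p q b (2 * m + 1) x (y - 1) ∈ semigroup p q :=
      combination_mem_of_odd (by omega) (by omega) hx (by omega) (by omega)
    have hh₀ : combination p q 0 (2 * 0 + 1) 0 1 ∈ semigroup p q :=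
      combination_mem_of_odd le_rfl (by omega) le_rfl le_rfl (by omega)
    convert add_mem hodd hh₀ using 1
    unfold combination
    ring

/-- The digits of `n = l * q + k * p + j` in the mixed radix expansion with `q = 2 * p ^ 2`. -/
structure IsDigits (p l k j : ℤ) : Prop where
  l_nonneg : 0 ≤ l
  k_nonneg : 0 ≤ k
  k_lt : k < 2 * p
  j_nonneg : 0 ≤ j
  j_lt : j < p

/-- The factor of `q₀` inside the maximum defining `φ` on the lower half of the residues. -/
def lowLevel (l k j : ℤ) : ℤ := if j = 0 then k + 2 * l + 2 else (k + 1) / 2 + j + l + 1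

/-- The value `φ (l * q + k * p + j)` on the lower half; `p * (2 * p - E)` is
the `q - q₀ * E` of the statement. -/
def lowValue (p l k j : ℤ) : ℤ :=
  if j = 0 ∧ k = 0 then l else l + 1 + p * max (2 * p - lowLevel l k j) 0

/-- The factor of `q₀` inside the maximum defining `φ` on the upper half of the residues. -/
def highLevel (p l k j : ℤ) : ℤ :=
  if j = p - 1 then k + 2 * l + 1 else (k + 1) / 2 + j + l + 1

/-- The value `φ (q ^ 2 - q - (l * q + k * p + j))` on the upper half. -/
def highValue (p q l k j : ℤ) : ℤ := q - l - 1 - p * max (2 * p - highLevel p l k j) 0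

theorem lowValue_mem (hq : q = 2 * p ^ 2) (h : IsDigits p l k j) :
    lowValue p l k j * (q ^ 2 - q + 1) + (l * q + k * p + j) ∈ semigroup p q := by
  obtain ⟨hl, hk, hkp, hj, hjp⟩ := h
  rw [lowValue]
  split_ifs with hjk
  · obtain ⟨rfl, rfl⟩ := hjk
    convert combination_zero_mem (q := q) (p := p) (b := l) le_rfl le_rfl (by omega) using 1
    unfold combination
    ring
  obtain ⟨d, hd⟩ : ∃ d, d = max (2 * p - lowLevel l k j) 0 := ⟨_, rfl⟩
  rw [← hd]
  rw [lowLevel] at hd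
  split_ifs at hd with hj0
  · have hmem : combination p q (l + 1) d 0 (2 * p - k) ∈ semigroup p q :=
      combination_mem_of_y_pos (by omega) (by omega) le_rfl (by omega) (by omega)
    convert hmem using 1
    rw [combination, hj0, hq]
    ring
  · have hmem : combination p q (l + 1) d (p - j) (2 * p - 1 - k) ∈ semigroup p q :=
      combination_mem_of_x_pos (by omega) (by omega) (by omega) (by omega) (by omega)
    convert hmem using 1
    rw [combination, hq]
    ring

theorem highValue_mem (hp : 2 ≤ p) (hq : q = 2 * p ^ 2) (h : IsDigits p l k j)
    (hlq : 2 * l ≤ q - 2) :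
    highValue p q l k j * (q ^ 2 - q + 1) + (q ^ 2 - q - (l * q + k * p + j)) ∈
      semigroup p q := by
  obtain ⟨hl, hk, hkp, hj, hjp⟩ := h
  have hpq : 4 * p ≤ q := by nlinarith
  obtain ⟨E, hE⟩ : ∃ E, E = highLevel p l k j := ⟨_, rfl⟩
  rw [highValue, ← hE]
  obtain hlarge | hsmall := le_or_gt (2 * p) E
  · have hmem : combination p q (q - l - 1) 0 j k ∈ semigroup p q :=
      combination_zero_mem hj hk (by omega)
    convert hmem using 1
    rw [combination, max_eq_right (by omega)]
    ring
  rw [max_eq_left (by omega)]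
  by_cases hlast : j = p - 1 ∧ E ≠ 2 * p - 1
  · rw [highLevel, if_pos hlast.1] at hE
    have hmem : combination p q (-l) E 0 (k + 1) ∈ semigroup p q :=
      combination_mem_of_y_pos (by omega) (by omega) le_rfl (by omega) (by omega)
    convert hmem using 1
    rw [combination, hlast.1, hq]
    ring
  · have hmem : combination p q (-l) E (j + 1) k ∈ semigroup p q := by
      rw [highLevel] at hE
      exact combination_mem_of_x_pos (by omega) (by omega) (by omega) hk (by omega)
    convert hmem using 1
    rw [combination, hq]
    ring

-- Adding `x + y p` to `l q + k p + j` carries `A` out of the units and `B` out of the `p`-digit.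
theorem exists_carries (hq : q = 2 * p ^ 2) (h : l * q + k * p + j = b * q - x - y * p) :
    ∃ A B, b = l + B ∧ x = p * A - j ∧ y = 2 * p * B - k - A ∧
      2 * x + y - 2 * b = (2 * p - 1) * A + (2 * p - 2) * B - 2 * j - k - 2 * l := by
  have hx : x = p * (2 * p * (b - l) - k - y) - j := by
    linear_combination h + (b - l) * hq
  exact ⟨2 * p * (b - l) - k - y, b - l, by ring, hx, by ring, by rw [hx]; ring⟩

theorem lowValue_le_add {B D : ℤ} (hp : 0 ≤ p) (hB : 0 ≤ B) (hD : 0 ≤ D)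
    (h : ¬(j = 0 ∧ k = 0) → 1 ≤ B ∧ 2 * p - lowLevel l k j ≤ D) :
    lowValue p l k j ≤ l + B + D * p := by
  rw [lowValue]
  split_ifs with hjk
  · have : 0 ≤ D * p := mul_nonneg hD hp
    linarith
  · obtain ⟨hB1, hlevel⟩ := h hjk
    have : p * max (2 * p - lowLevel l k j) 0 ≤ p * D :=
      mul_le_mul_of_nonneg_left (max_le hlevel hD) hp
    linarith

theorem highValue_le_add {B D : ℤ} (hp : 0 ≤ p) (hB : 0 ≤ B)
    (h : 0 ≤ D ∨ highLevel p l k j - 2 * p ≤ D) :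
    highValue p q l k j ≤ q - l - 1 + B + D * p := by
  have : p * -max (2 * p - highLevel p l k j) 0 ≤ p * D :=
    mul_le_mul_of_nonneg_left (by omega) hp
  rw [highValue]
  linarith

theorem lowValue_le_sub_one (hp : 2 ≤ p) (hq : q = 2 * p ^ 2)
    (h : IsDigits p l k j) (hlq : 2 * l ≤ q - 2) : lowValue p l k j ≤ q - 1 := by
  obtain ⟨hl, hk, -, hj, -⟩ := h
  obtain ⟨D, hD⟩ : ∃ D, D = max (2 * p - lowLevel l k j) 0 := ⟨_, rfl⟩
  have hlevel : l + 2 ≤ lowLevel l k j ∨ (j = 0 ∧ k = 0) := by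
    rw [lowLevel]; split_ifs <;> omega
  rw [lowValue, ← hD]
  split_ifs with hjk
  · omega
  have hlevel := hlevel.resolve_right hjk
  obtain hDl | hDl : D = 0 ∨ D ≤ 2 * p - l - 2 := by omega
  · rw [hDl]; nlinarith
  · nlinarith

theorem highValue_le_sub_one (hp : 0 ≤ p) (hl : 0 ≤ l) :
    highValue p q l k j ≤ q - 1 := by
  have : 0 ≤ p * max (2 * p - highLevel p l k j) 0 := by positivity
  rw [highValue]
  linarith

theorem lowValue_le_of_no_wrap (hp : 2 ≤ p) (hq : q = 2 * p ^ 2)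
    (hdig : IsDigits p l k j) (hadm : Admissible b d x y)
    (h : l * q + k * p + j = b * q - x - y * p) : lowValue p l k j ≤ b + d * p := by
  obtain ⟨hl, hk, hkp, hj, hjp⟩ := hdig
  obtain ⟨hd, hx, hy, hle, hor⟩ := hadm
  obtain ⟨A, B, rfl, hxA, hyB, hslack⟩ := exists_carries hq h
  have hA : 0 ≤ A := nonneg_of_neg_lt_mul (by omega) (by omega : -p < p * A)
  have hB : 0 ≤ B := nonneg_of_neg_lt_mul (by omega) (by omega : -(2 * p) < 2 * p * B)
  have hApos (hpos : 1 ≤ x ∨ j ≠ 0) : 1 ≤ A :=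
    pos_of_mul_pos_right (by omega : 0 < p * A) (by omega)
  refine lowValue_le_add (by omega) hB hd fun hjk ↦ ?_
  have hB1 : 1 ≤ B := pos_of_mul_pos_right (by omega : 0 < 2 * p * B) (by omega)
  have hBp : 2 * p - 2 ≤ (2 * p - 2) * B := le_mul_of_one_le_right (by omega) hB1
  refine ⟨hB1, ?_⟩
  by_cases hpos : 1 ≤ x ∨ j ≠ 0
  · have hAp : 2 * p - 1 ≤ (2 * p - 1) * A := le_mul_of_one_le_right (by omega) (hApos hpos)
    rw [lowLevel]
    split_ifs <;> omega
  · have hAp : 0 ≤ (2 * p - 1) * A := mul_nonneg (by omega) hA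
    rw [lowLevel]
    split_ifs <;> omega

theorem lowValue_le_of_wrap_of_x_pos (hp : 2 ≤ p) (hq : q = 2 * p ^ 2)
    (hdig : IsDigits p l k j) (hlq : 2 * l ≤ q - 2) (hx : 1 ≤ x) (hy : 0 ≤ y)
    (hle : 2 * x + y ≤ 2 * b + 2 * d)
    (h : l * q + k * p + j - (q ^ 2 - q + 1) = b * q - x - y * p) :
    lowValue p l k j ≤ b + d * p - 1 := by
  obtain ⟨hl, hk, hkp, hj, hjp⟩ := hdig
  have hpq : 4 * p ≤ q := by nlinarith
  obtain ⟨A, B, hbB, hxA, hyB, hslack⟩ :=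
    exists_carries (l := l) (k := k) (j := j) (b := b + (q - 1)) (x := x - 1) (y := y) hq
      (by linear_combination h)
  have hA : 0 ≤ A := nonneg_of_neg_lt_mul (by omega) (by omega : -p < p * A)
  have hB : 0 ≤ B := nonneg_of_neg_lt_mul (by omega) (by omega : -(2 * p) < 2 * p * B)
  have hshift : b + d * p - 1 = l + B + (d - 2 * p) * p := by
    linear_combination hbB - hq
  have hAp : 0 ≤ (2 * p - 1) * A := mul_nonneg (by omega) hA
  rw [hshift]
  by_cases hjk : j = 0 ∧ k = 0
  · have hBp : 0 ≤ (2 * p - 2) * B := mul_nonneg (by omega) hB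
    exact lowValue_le_add (by omega) hB (by omega) fun h ↦ absurd hjk h
  have hApos (hj0 : j ≠ 0) : 1 ≤ A := pos_of_mul_pos_right (by omega : 0 < p * A) (by omega)
  have hAp' (hj0 : j ≠ 0) : 2 * p - 1 ≤ (2 * p - 1) * A :=
    le_mul_of_one_le_right (by omega) (hApos hj0)
  have hB1 : 1 ≤ B := pos_of_mul_pos_right (by omega : 0 < 2 * p * B) (by omega)
  have hBp : 2 * p - 2 ≤ (2 * p - 2) * B := le_mul_of_one_le_right (by omega) hB1
  have hlevel : 2 * p - lowLevel l k j ≤ d - 2 * p := by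
    rw [lowLevel]
    split_ifs <;> omega
  exact lowValue_le_add (by omega) hB (by omega) fun _ ↦ ⟨hB1, hlevel⟩

theorem lowValue_le_of_wrap_of_x_eq_zero (hp : 2 ≤ p) (hq : q = 2 * p ^ 2)
    (hdig : IsDigits p l k j) (hlq : 2 * l ≤ q - 2) (hadm : Admissible b d 0 y)
    (h : l * q + k * p + j - (q ^ 2 - q + 1) = b * q - 0 - y * p) :
    lowValue p l k j ≤ b + d * p - 1 := by
  obtain ⟨hl, hk, hkp, hj, hjp⟩ := hdig
  obtain ⟨hd, -, hy, -, hor⟩ := hadm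
  obtain ⟨hle, hdy⟩ := hor.resolve_left (by norm_num)
  have hpq : 4 * p ≤ q := by nlinarith
  obtain ⟨A, B, hbB, hxA, hyB, hslack⟩ :=
    exists_carries (l := l) (k := k) (j := j) (b := b + (q - 1)) (x := -1) (y := y) hq
      (by linear_combination h)
  have hA : A = 0 := by
    have : -1 < A ∧ A < 1 := by constructor <;> nlinarith
    omega
  subst hA
  have hB : 0 ≤ B := nonneg_of_neg_lt_mul (by omega) (by omega : -(2 * p) < 2 * p * B)
  have hB1 : 1 ≤ B := by
    refine hB.lt_of_ne ?_
    rintro rfl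
    omega
  have hBp : 2 * p - 2 ≤ (2 * p - 2) * B := le_mul_of_one_le_right (by omega) hB1
  have hshift : b + d * p - 1 = l + B + (d - 2 * p) * p := by
    linear_combination hbB - hq
  rw [hshift]
  refine lowValue_le_add (by omega) hB (by omega) fun _ ↦ ⟨hB1, ?_⟩
  rw [lowLevel]
  split_ifs <;> omega

theorem lowValue_le_of_wrap (hp : 2 ≤ p) (hq : q = 2 * p ^ 2)
    (hdig : IsDigits p l k j) (hlq : 2 * l ≤ q - 2) (hadm : Admissible b d x y)
    (h : l * q + k * p + j - (q ^ 2 - q + 1) = b * q - x - y * p) :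
    lowValue p l k j ≤ b + d * p - 1 := by
  obtain rfl | hx := hadm.x_nonneg.eq_or_lt
  · exact lowValue_le_of_wrap_of_x_eq_zero hp hq hdig hlq hadm h
  · exact lowValue_le_of_wrap_of_x_pos hp hq hdig hlq hx hadm.y_nonneg hadm.le_two_mul h

theorem highValue_le_of_no_wrap (hp : 0 < p) (hq : q = 2 * p ^ 2)
    (hdig : IsDigits p l k j) (hadm : Admissible b d x y)
    (h : q ^ 2 - q - (l * q + k * p + j) = b * q - x - y * p) :
    highValue p q l k j ≤ b + d * p := by
  obtain ⟨-, -, hkp, -, hjp⟩ := hdig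
  obtain ⟨hd, hx, hy, -, -⟩ := hadm
  have hB : 0 ≤ b - (q - l - 1) := by
    apply nonneg_of_neg_lt_mul (p := q) (by nlinarith)
    nlinarith
  have := highValue_le_add (q := q) (l := l) (k := k) (j := j) hp.le hB (.inl hd)
  linarith

theorem highValue_le_of_wrap (hp : 2 ≤ p) (hq : q = 2 * p ^ 2)
    (hdig : IsDigits p l k j) (hadm : Admissible b d x y)
    (h : q ^ 2 - q - (l * q + k * p + j) - (q ^ 2 - q + 1) = b * q - x - y * p) :
    highValue p q l k j ≤ b + d * p - 1 := by
  obtain ⟨hl, -, hkp, hj, hjp⟩ := hdig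
  obtain ⟨-, hx, hy, hle, hor⟩ := hadm
  obtain ⟨A, B, rfl, hxA, hyB, hslack⟩ :=
    exists_carries (l := -l) (k := -k) (j := -j - 1) (b := b) (x := x) (y := y) hq
      (by linear_combination h)
  have hshift : -l + B + d * p - 1 = q - l - 1 + B + (d - 2 * p) * p := by
    linear_combination -hq
  rw [hshift]
  obtain hA | hA := lt_or_ge A 0
  · have hx0 : x = 0 ∧ A = -1 ∧ j = p - 1 := by
      have : -2 < A := by nlinarith
      obtain rfl : A = -1 := by omega
      omega
    obtain ⟨rfl, rfl, rfl⟩ := hx0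
    obtain ⟨hle', hdy⟩ := hor.resolve_left (by norm_num)
    have hB : 0 ≤ B := by
      by_contra! hneg
      have : 2 * p * B ≤ 2 * p * (-1) := mul_le_mul_of_nonneg_left (by omega) (by omega)
      omega
    have hBp : 0 ≤ (2 * p - 2) * B := mul_nonneg (by omega) hB
    refine highValue_le_add (by omega) hB (.inr ?_)
    rw [highLevel, if_pos rfl]
    omega
  · have hB : 0 ≤ B := nonneg_of_neg_lt_mul (by omega) (by omega : -(2 * p) < 2 * p * B)
    have hAp : 0 ≤ (2 * p - 1) * A := mul_nonneg (by omega) hA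
    have hBp : 0 ≤ (2 * p - 2) * B := mul_nonneg (by omega) hB
    refine highValue_le_add (by omega) hB ?_
    rw [highLevel]
    split_ifs <;> omega

theorem sub_one_le_of_pos_wrap {i t : ℤ} (hp : 0 ≤ p) (hq : 1 ≤ q)
    (hi : 0 ≤ i) (ht : 1 ≤ t) (hx : 0 ≤ x) (hy : 0 ≤ y) (hd : 0 ≤ d)
    (h : i + t * (q ^ 2 - q + 1) = b * q - x - y * p) : q - 1 ≤ b + d * p + t := by
  have hdp : 0 ≤ d * p := mul_nonneg hd hp
  have hyp : 0 ≤ y * p := mul_nonneg hy hp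
  have : 0 ≤ (t - 1) * (q ^ 2 - q + 1) := mul_nonneg (by omega) (by nlinarith)
  have : q * (q - 1) < q * b := by linarith
  have := lt_of_mul_lt_mul_left this (by omega)
  linarith

-- Adding `hb` weighted by `2p - r` to `hd` weighted by `pq` eliminates `b` and `d` in favour of
-- `b + dp`, and the coefficients of `x` and `y` come out positive.
theorem le_mul_of_neg_wrap {t r : ℤ} (hp : 0 ≤ p) (hq : 0 ≤ q) (hr : r ≤ 2 * p)
    (hb : t * (q ^ 2 - q + 1) + 1 - x - y * p ≤ -b * q) (hd : 2 * x + y ≤ 2 * b + r * d) :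
    x * (2 * p * q - (2 * p - r)) + y * (p * (q - (2 * p - r))) +
        (2 * p - r) * (t * (q ^ 2 - q + 1) + 1) - r * (t + 1) * q ≤
      r * (q * (b + d * p - (t + 1))) := by
  have hb' := mul_le_mul_of_nonneg_left hb (sub_nonneg.2 hr)
  have hd' := mul_le_mul_of_nonneg_left hd (mul_nonneg hp hq)
  linarith

theorem sub_one_le_of_neg_wrap {i t : ℤ} (hp : 2 ≤ p) (hq : q = 2 * p ^ 2)
    (hi : i ≤ q ^ 2 - q) (ht : t ≤ -2) (hadm : Admissible b d x y)
    (h : i + t * (q ^ 2 - q + 1) = b * q - x - y * p) : q - 1 ≤ b + d * p + t := by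
  obtain ⟨-, hx, hy, hle, hor⟩ := hadm
  obtain ⟨u, rfl⟩ : ∃ u, t = -(u + 1) := ⟨-t - 1, by ring⟩
  have hpq : 4 * p ≤ q := by nlinarith
  have hb : u * (q ^ 2 - q + 1) + 1 - x - y * p ≤ -b * q := by linarith
  suffices q * (q - 2) < q * (b + d * p - (u + 1)) by
    have := lt_of_mul_lt_mul_left this (by omega)
    omega
  have hpsq : 0 ≤ (p - 2) * (q ^ 2 + 1) := mul_nonneg (by omega) (by positivity)
  by_cases hxpos : 1 ≤ x
  · have hbound := le_mul_of_neg_wrap (by omega) (by omega) (by omega) hb hle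
    have hx' : 0 ≤ (x - 1) * (2 * p * q - (2 * p - 2)) := mul_nonneg (by omega) (by nlinarith)
    have hy' : 0 ≤ y * (p * (q - (2 * p - 2))) :=
      mul_nonneg hy (mul_nonneg (by omega) (by omega))
    have hu' : 0 ≤ (u - 1) * ((2 * p - 2) * (q ^ 2 - q + 1) - 2 * q) :=
      mul_nonneg (by omega) (by nlinarith)
    nlinarith
  · have hle' : 2 * x + y ≤ 2 * b + 1 * d := by omega
    have hbound := le_mul_of_neg_wrap (by omega) (by omega) (by omega) hb hle'
    have hx' : 0 ≤ x * (2 * p * q - (2 * p - 1)) := mul_nonneg hx (by nlinarith)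
    have hy' : 0 ≤ y * (p * (q - (2 * p - 1))) :=
      mul_nonneg hy (mul_nonneg (by omega) (by omega))
    have hu' : 0 ≤ (u - 1) * ((2 * p - 1) * (q ^ 2 - q + 1) - q) :=
      mul_nonneg (by omega) (by nlinarith)
    nlinarith

theorem exists_wrap_of_mem {c i : ℤ} (h : c * (q ^ 2 - q + 1) + i ∈ semigroup p q) :
    ∃ b d x y t, Admissible b d x y ∧ b + d * p + t ≤ c ∧
      i + t * (q ^ 2 - q + 1) = b * q - x - y * p := by
  obtain ⟨b, d, x, y, e, hadm, he, hn⟩ := exists_admissible_of_mem h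
  refine ⟨b, d, x, y, c - b - d * p - e, hadm, by linarith, ?_⟩
  rw [combination] at hn
  linear_combination hn

theorem lowValue_le_of_mem {c : ℤ} (hp : 2 ≤ p) (hq : q = 2 * p ^ 2)
    (hdig : IsDigits p l k j) (hlq : 2 * l ≤ q - 2)
    (h : c * (q ^ 2 - q + 1) + (l * q + k * p + j) ∈ semigroup p q) :
    lowValue p l k j ≤ c := by
  obtain ⟨b, d, x, y, t, hadm, hc, hwrap⟩ := exists_wrap_of_mem h
  refine le_trans ?_ hc
  have hvalue := lowValue_le_sub_one hp hq hdig hlq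
  have ⟨hl, hk, hkp, hj, hjp⟩ := hdig
  obtain ht | rfl | rfl | ht : 1 ≤ t ∨ t = 0 ∨ t = -1 ∨ t ≤ -2 := by omega
  · exact hvalue.trans (sub_one_le_of_pos_wrap (by omega) (by nlinarith)
      (by nlinarith) ht hadm.x_nonneg hadm.y_nonneg hadm.d_nonneg hwrap)
  · simpa using lowValue_le_of_no_wrap hp hq hdig hadm (by linarith)
  · exact lowValue_le_of_wrap hp hq hdig hlq hadm (by linarith)
  · exact hvalue.trans (sub_one_le_of_neg_wrap hp hq (by nlinarith) ht hadm hwrap)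

theorem highValue_le_of_mem {c : ℤ} (hp : 2 ≤ p) (hq : q = 2 * p ^ 2)
    (hdig : IsDigits p l k j) (hlq : 2 * l ≤ q - 2)
    (h : c * (q ^ 2 - q + 1) + (q ^ 2 - q - (l * q + k * p + j)) ∈ semigroup p q) :
    highValue p q l k j ≤ c := by
  obtain ⟨b, d, x, y, t, hadm, hc, hwrap⟩ := exists_wrap_of_mem h
  refine le_trans ?_ hc
  have ⟨hl, hk, hkp, hj, hjp⟩ := hdig
  have hvalue : highValue p q l k j ≤ q - 1 := highValue_le_sub_one (by omega) hl
  obtain ht | rfl | rfl | ht : 1 ≤ t ∨ t = 0 ∨ t = -1 ∨ t ≤ -2 := by omega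
  · exact hvalue.trans (sub_one_le_of_pos_wrap (by omega) (by nlinarith)
      (by nlinarith) ht hadm.x_nonneg hadm.y_nonneg hadm.d_nonneg hwrap)
  · simpa using highValue_le_of_no_wrap (by omega) hq hdig hadm (by linarith)
  · exact highValue_le_of_wrap hp hq hdig hadm (by linarith)
  · exact hvalue.trans (sub_one_le_of_neg_wrap hp hq (by nlinarith) ht hadm hwrap)

theorem isLeast_lowValue (hp : 2 ≤ p) (hq : q = 2 * p ^ 2)
    (hdig : IsDigits p l k j) (hlq : 2 * l ≤ q - 2) :
    IsLeast {c | c * (q ^ 2 - q + 1) + (l * q + k * p + j) ∈ semigroup p q}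
      (lowValue p l k j) :=
  ⟨lowValue_mem hq hdig, fun _ ↦ lowValue_le_of_mem hp hq hdig hlq⟩

theorem isLeast_highValue (hp : 2 ≤ p) (hq : q = 2 * p ^ 2)
    (hdig : IsDigits p l k j) (hlq : 2 * l ≤ q - 2) :
    IsLeast {c | c * (q ^ 2 - q + 1) + (q ^ 2 - q - (l * q + k * p + j)) ∈ semigroup p q}
      (highValue p q l k j) :=
  ⟨highValue_mem hp hq hdig hlq, fun _ ↦ highValue_le_of_mem hp hq hdig hlq⟩

end Integer

section Natural

variable {p q l k j : ℕ}

/-- The generators of `H` in `ℕ`, with `p` for `q₀` and the values of `g₀, …, g₄` substituted. -/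
def natGenerators (p q : ℕ) : Set ℕ :=
  {q ^ 2 - q + 1, q ^ 2 - 2 * p + 1, q ^ 2 - p + 1, q ^ 2, q ^ 2 + 1} ∪
    {x | ∃ i, i + 2 ≤ 2 * p ∧ x = (i + 1) * p * (q ^ 2 - q + 1) - i * (q ^ 2 + 1) - 1} ∪
    {x | ∃ j, j + 2 ≤ p ∧ x = (2 * j + 1) * p * (q ^ 2 - q + 1) - j * (q ^ 2 + 1) - p}

theorem natCast_f {i : ℕ} (hp : 2 ≤ p) (hq : 2 * q ≤ q ^ 2) :
    (((i + 1) * p * (q ^ 2 - q + 1) - i * (q ^ 2 + 1) - 1 : ℕ) : ℤ) =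
      (i + 1) * p * (q ^ 2 - q + 1) - i * (q ^ 2 + 1) - 1 := by
  have hg : q ^ 2 + 2 ≤ 2 * (q ^ 2 - q + 1) := by omega
  have hle : i * (q ^ 2 + 1) + 1 ≤ (i + 1) * p * (q ^ 2 - q + 1) := by
    calc i * (q ^ 2 + 1) + 1 ≤ (i + 1) * (q ^ 2 + 2) := by nlinarith
      _ ≤ (i + 1) * (p * (q ^ 2 - q + 1)) := by gcongr; exact hg.trans (by gcongr)
      _ = _ := by ring
  rw [Nat.sub_sub, Nat.cast_sub hle]
  push_cast [Nat.cast_sub (by omega : q ≤ q ^ 2)]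
  ring

theorem natCast_h {i : ℕ} (hp : 2 ≤ p) (hq : 2 * q ≤ q ^ 2) :
    (((2 * i + 1) * p * (q ^ 2 - q + 1) - i * (q ^ 2 + 1) - p : ℕ) : ℤ) =
      (2 * i + 1) * p * (q ^ 2 - q + 1) - i * (q ^ 2 + 1) - p := by
  have hg : q ^ 2 + 1 ≤ 2 * (q ^ 2 - q + 1) := by omega
  have hle : i * (q ^ 2 + 1) + p ≤ (2 * i + 1) * p * (q ^ 2 - q + 1) := by
    calc i * (q ^ 2 + 1) + p ≤ i * (p * (2 * (q ^ 2 - q + 1))) + p * (q ^ 2 - q + 1) := by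
          gcongr
          · exact hg.trans (Nat.le_mul_of_pos_left _ (by omega))
          · exact Nat.le_mul_of_pos_right _ (by omega)
      _ = _ := by ring
  rw [Nat.sub_sub, Nat.cast_sub hle]
  push_cast [Nat.cast_sub (by omega : q ≤ q ^ 2)]
  ring

theorem natCast_image_natGenerators (hp : 2 ≤ p) (hpq : 2 * p ≤ q ^ 2) (hq : 2 * q ≤ q ^ 2) :
    (Nat.castAddMonoidHom ℤ) '' natGenerators p q = generators p q := by
  have hg₀ : ((q ^ 2 - q + 1 : ℕ) : ℤ) = q ^ 2 - q + 1 := by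
    push_cast [Nat.cast_sub (by omega : q ≤ q ^ 2)]; rfl
  have hg₁ : ((q ^ 2 - 2 * p + 1 : ℕ) : ℤ) = q ^ 2 - 2 * p + 1 := by
    push_cast [Nat.cast_sub hpq]; rfl
  have hg₂ : ((q ^ 2 - p + 1 : ℕ) : ℤ) = q ^ 2 - p + 1 := by
    push_cast [Nat.cast_sub (by omega : p ≤ q ^ 2)]; rfl
  rw [natGenerators, generators, Set.image_union, Set.image_union]
  congr 1
  · congr 1
    · simp only [Set.image_insert_eq, Set.image_singleton, Nat.coe_castAddMonoidHom,
        hg₀, hg₁, hg₂, Nat.cast_pow, Nat.cast_succ]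
    · ext z
      constructor
      · rintro ⟨_, ⟨i, hi, rfl⟩, rfl⟩
        exact ⟨i, by omega, by omega, natCast_f hp hq⟩
      · rintro ⟨i, hi, hip, rfl⟩
        lift i to ℕ using hi
        exact ⟨_, ⟨i, by omega, rfl⟩, natCast_f hp hq⟩
  · ext z
    constructor
    · rintro ⟨_, ⟨i, hi, rfl⟩, rfl⟩
      exact ⟨i, by omega, by omega, natCast_h hp hq⟩
    · rintro ⟨i, hi, hip, rfl⟩
      lift i to ℕ using hi
      exact ⟨_, ⟨i, by omega, rfl⟩, natCast_h hp hq⟩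

theorem natCast_mem_semigroup_iff (hp : 2 ≤ p) (hpq : 2 * p ≤ q ^ 2) (hq : 2 * q ≤ q ^ 2)
    {n : ℕ} :
    (n : ℤ) ∈ semigroup p q ↔ n ∈ AddSubmonoid.closure (natGenerators p q) := by
  rw [semigroup, ← natCast_image_natGenerators hp hpq hq, ← AddMonoidHom.map_mclosure]
  exact AddSubmonoid.mem_map_iff_mem (f := Nat.castAddMonoidHom ℤ) Nat.cast_injective

theorem isLeast_natCast {i v : ℕ} (hp : 2 ≤ p) (hq : q = 2 * p ^ 2)
    (h : IsLeast {c : ℤ | c * (q ^ 2 - q + 1) + i ∈ semigroup p q} v) :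
    IsLeast {c | c * (q ^ 2 - q + 1) + i ∈ AddSubmonoid.closure (natGenerators p q)} v := by
  have hpq : 2 * p ≤ q := by nlinarith
  have hqq : 2 * q ≤ q ^ 2 := by nlinarith
  have hmem (c : ℕ) : c * (q ^ 2 - q + 1) + i ∈ AddSubmonoid.closure (natGenerators p q) ↔
      (c : ℤ) * (q ^ 2 - q + 1) + i ∈ semigroup p q := by
    rw [← natCast_mem_semigroup_iff hp (by omega) hqq]
    push_cast [Nat.cast_sub (by omega : q ≤ q ^ 2)]
    rfl
  exact ⟨(hmem v).2 h.1, fun c hc ↦ Int.ofNat_le.1 (h.2 ((hmem c).1 hc))⟩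

theorem natCast_lowValue (hq : q = 2 * p ^ 2) :
    ((if j = 0 ∧ k = 0 then l
      else if j = 0 then l + 1 + (q - p * (k + 2 * l + 2))
      else l + 1 + (q - p * ((k + 1) / 2 + j + l + 1)) : ℕ) : ℤ) = lowValue p l k j := by
  subst hq
  simp only [lowValue, lowLevel, Nat.cast_eq_zero]
  split_ifs <;> push_cast [natCast_two_mul_sq_sub] <;> rfl

theorem natCast_sub_level {E : ℕ} (hp : 0 < p) (hq : q = 2 * p ^ 2) (hlq : l + 1 ≤ q)
    (hE : l + 1 ≤ E) :
    ((q - l - 1 - (q - p * E) : ℕ) : ℤ) = q - l - 1 - p * max (2 * p - E : ℤ) 0 := by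
  have hle : l + 1 ≤ p * E := hE.trans (Nat.le_mul_of_pos_left E hp)
  rw [← natCast_two_mul_sq_sub, ← hq]
  omega

theorem natCast_highValue (hp : 0 < p) (hq : q = 2 * p ^ 2) (hlq : l + 1 ≤ q) :
    ((if j = p - 1 then q - l - 1 - (q - p * (k + 2 * l + 1))
      else q - l - 1 - (q - p * ((k + 1) / 2 + j + l + 1)) : ℕ) : ℤ) =
      highValue p q l k j := by
  have hj : j = p - 1 ↔ (j : ℤ) = p - 1 := by omega
  simp only [highValue, highLevel, hj]
  split_ifs <;> rw [natCast_sub_level hp hq hlq (by omega)] <;> push_cast <;> rfl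

theorem isLeast_natLow {i : ℕ} (hp : 2 ≤ p) (hq : q = 2 * p ^ 2)
    (hi : i ≤ q * (q - 2) / 2) (hdig : i = l * q + k * p + j) (hk : k < 2 * p) (hj : j < p) :
    IsLeast {c | c * (q ^ 2 - q + 1) + i ∈ AddSubmonoid.closure (natGenerators p q)}
      (if j = 0 ∧ k = 0 then l
        else if j = 0 then l + 1 + (q - p * (k + 2 * l + 2))
        else l + 1 + (q - p * ((k + 1) / 2 + j + l + 1))) := by
  have hlq : 2 * l ≤ q - 2 := by
    have hle : q * (2 * l) ≤ q * (q - 2) := by rw [Nat.mul_left_comm, Nat.mul_comm q l]; omega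
    exact Nat.le_of_mul_le_mul_left hle (by nlinarith)
  have hq2 : 2 ≤ q := by nlinarith
  apply isLeast_natCast hp hq
  rw [natCast_lowValue hq, hdig]
  push_cast
  exact isLeast_lowValue (by omega) (by exact_mod_cast hq) (by constructor <;> omega) (by omega)

theorem isLeast_natHigh {i : ℕ} (hp : 2 ≤ p) (hq : q = 2 * p ^ 2)
    (hi : q * (q - 2) / 2 + 1 ≤ i) (hiq : i ≤ q ^ 2 - q)
    (hdig : q ^ 2 - q - i = l * q + k * p + j) (hk : k < 2 * p) (hj : j < p) :
    IsLeast {c | c * (q ^ 2 - q + 1) + i ∈ AddSubmonoid.closure (natGenerators p q)}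
      (if j = p - 1 then q - l - 1 - (q - p * (k + 2 * l + 1))
        else q - l - 1 - (q - p * ((k + 1) / 2 + j + l + 1))) := by
  have hq2 : 2 ≤ q := by nlinarith
  have hqq : q * (q - 2) + 2 * q = q ^ 2 := by
    rw [sq, Nat.mul_comm 2 q, ← Nat.mul_add, Nat.sub_add_cancel hq2]
  have hlq : 2 * l < q := by
    have hlt : q * (2 * l) < q * q := by rw [Nat.mul_left_comm, Nat.mul_comm q l, ← sq]; omega
    exact Nat.lt_of_mul_lt_mul_left hlt
  have hcast : (i : ℤ) = q ^ 2 - q - (l * q + k * p + j) := by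
    have : i + (l * q + k * p + j) + q = q ^ 2 := by omega
    linear_combination (by exact_mod_cast this : (i + (l * q + k * p + j) + q : ℤ) = q ^ 2)
  apply isLeast_natCast hp hq
  rw [natCast_highValue (by omega) hq (by omega), hcast]
  exact isLeast_highValue (by omega) (by exact_mod_cast hq) (by constructor <;> omega) (by omega)

end Natural

end AperySet

open AperySet in
theorem stmt_11_general (q₀ q g₀ g₁ g₂ g₃ g₄ : ℕ)
    (hq₀ : 2 ≤ q₀) (hq : q = 2 * q₀ ^ 2)
    (hg₀ : g₀ = q ^ 2 - q + 1) (hg₁ : g₁ = q ^ 2 - 2 * q₀ + 1)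
    (hg₂ : g₂ = q ^ 2 - q₀ + 1) (hg₃ : g₃ = q ^ 2) (hg₄ : g₄ = q ^ 2 + 1)
    (H : AddSubmonoid ℕ)
    (hH : H = AddSubmonoid.closure
      ({g₀, g₁, g₂, g₃, g₄} ∪
        {x | ∃ i : ℕ, i + 2 ≤ 2 * q₀ ∧ x = (i + 1) * q₀ * g₀ - i * g₄ - 1} ∪
        {x | ∃ j : ℕ, j + 2 ≤ q₀ ∧ x = (2 * j + 1) * q₀ * g₀ - j * g₄ - q₀}))
    (φ : ℕ → ℕ)
    (hφlow : ∀ i l k j : ℕ, i ≤ q * (q - 2) / 2 → i = l * q + k * q₀ + j →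
      j + 1 ≤ q₀ → k + 1 ≤ 2 * q₀ →
      φ i = if j = 0 ∧ k = 0 then l
            else if j = 0 then l + 1 + (q - q₀ * (k + 2 * l + 2))
            else l + 1 + (q - q₀ * ((k + 1) / 2 + j + l + 1)))
    (hφhigh : ∀ i l k j : ℕ, q * (q - 2) / 2 + 1 ≤ i → i ≤ q ^ 2 - q →
      q ^ 2 - q - i = l * q + k * q₀ + j →
      j + 1 ≤ q₀ → k + 1 ≤ 2 * q₀ →
      φ i = if j = q₀ - 1 then q - l - 1 - (q - q₀ * (k + 2 * l + 1))
            else q - l - 1 - (q - q₀ * ((k + 1) / 2 + j + l + 1))) :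
    {z : ℕ | z ∈ H ∧ ¬ ∃ w : ℕ, w ∈ H ∧ z = w + g₀} =
      {x : ℕ | ∃ i : ℕ, i ≤ q ^ 2 - q ∧ x = φ i * g₀ + i} := by
  have hH' : H = AddSubmonoid.closure (natGenerators q₀ q) := by subst_vars; rfl
  have hgH : g₀ ∈ H := hH ▸ AddSubmonoid.subset_closure (by simp)
  have hdigits (n : ℕ) : ∃ l k j, n = l * q + k * q₀ + j ∧ k < 2 * q₀ ∧ j < q₀ := by
    rw [hq, sq, ← mul_assoc]
    exact exists_mixedRadix_digits (by omega) (by omega) n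
  have hleast : ∀ i < g₀, IsLeast {c | c * g₀ + i ∈ H} (φ i) := by
    intro i hi
    rw [hg₀, Nat.lt_add_one_iff] at hi
    rw [hH', hg₀]
    obtain hlow | hhigh := le_or_gt i (q * (q - 2) / 2)
    · obtain ⟨l, k, j, hdig, hk, hj⟩ := hdigits i
      rw [hφlow i l k j hlow hdig hj hk]
      exact isLeast_natLow hq₀ hq hlow hdig hk hj
    · obtain ⟨l, k, j, hdig, hk, hj⟩ := hdigits (q ^ 2 - q - i)
      rw [hφhigh i l k j hhigh hi hdig hj hk]
      exact isLeast_natHigh hq₀ hq hhigh hi hdig hk hj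
  rw [apery_eq_of_isLeast hgH hleast]
  simp only [hg₀, Nat.lt_add_one_iff]

/-- The Apéry set `Ap(H) = { z ∈ H : z − g₀ ∉ H }` of the numerical semigroup `H`
generated by `g₀, g₁, g₂, g₃, g₄`, the `f_i` and the `h_j`, equals
`{ φ(i)·g₀ + i : 0 ≤ i ≤ q² − q }` (note `g₀ − 1 = q² − q`).
Here `z − g₀ ∉ H` (with `z − g₀` regarded as an integer) is expressed as
`¬ ∃ w ∈ H, z = w + g₀`; the function `φ` is characterized via the unique
decomposition `n = lq + kq₀ + j` with `0 ≤ j ≤ q₀−1`, `0 ≤ k ≤ 2q₀−1`, `l ≥ 0`;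
`max{x − y, 0}` for naturals is truncated subtraction and `⌈k/2⌉ = (k+1)/2`. -/
theorem stmt_11 (s : ℕ) (hs : 1 ≤ s) (q₀ q g₀ g₁ g₂ g₃ g₄ : ℕ)
    (hq₀ : q₀ = 2 ^ s) (hq : q = 2 * q₀ ^ 2)
    (hg₀ : g₀ = q ^ 2 - q + 1) (hg₁ : g₁ = q ^ 2 - 2 * q₀ + 1)
    (hg₂ : g₂ = q ^ 2 - q₀ + 1) (hg₃ : g₃ = q ^ 2) (hg₄ : g₄ = q ^ 2 + 1)
    (H : AddSubmonoid ℕ)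
    (hH : H = AddSubmonoid.closure
      ({g₀, g₁, g₂, g₃, g₄} ∪
        {x | ∃ i : ℕ, i + 2 ≤ 2 * q₀ ∧ x = (i + 1) * q₀ * g₀ - i * g₄ - 1} ∪
        {x | ∃ j : ℕ, j + 2 ≤ q₀ ∧ x = (2 * j + 1) * q₀ * g₀ - j * g₄ - q₀}))
    (φ : ℕ → ℕ)
    (hφlow : ∀ i l k j : ℕ, i ≤ q * (q - 2) / 2 → i = l * q + k * q₀ + j →
      j + 1 ≤ q₀ → k + 1 ≤ 2 * q₀ →
      φ i = if j = 0 ∧ k = 0 then l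
            else if j = 0 then l + 1 + (q - q₀ * (k + 2 * l + 2))
            else l + 1 + (q - q₀ * ((k + 1) / 2 + j + l + 1)))
    (hφhigh : ∀ i l k j : ℕ, q * (q - 2) / 2 + 1 ≤ i → i ≤ q ^ 2 - q →
      q ^ 2 - q - i = l * q + k * q₀ + j →
      j + 1 ≤ q₀ → k + 1 ≤ 2 * q₀ →
      φ i = if j = q₀ - 1 then q - l - 1 - (q - q₀ * (k + 2 * l + 1))
            else q - l - 1 - (q - q₀ * ((k + 1) / 2 + j + l + 1))) :
    {z : ℕ | z ∈ H ∧ ¬ ∃ w : ℕ, w ∈ H ∧ z = w + g₀} =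
      {x : ℕ | ∃ i : ℕ, i ≤ q ^ 2 - q ∧ x = φ i * g₀ + i} :=
  stmt_11_general q₀ q g₀ g₁ g₂ g₃ g₄ (hq₀ ▸ le_self_pow₀ one_le_two (by omega)) hq
    hg₀ hg₁ hg₂ hg₃ hg₄ H hH φ hφlow hφhigh
end

section
/- Let s ≥ 1 be an integer, q₀ = 2^s and q = 2q₀². For nonnegative integers a₁,a₂,a₃,a₄,f write σ = a₁+a₂+a₃+a₄+f and ν = a₁ + a₂q₀ + 2a₃q₀ + a₄q + fq². Define the sets F₁,…,F₆ of natural numbers: F₁ = {ν+1 : 0≤a₁≤q₀−1, 0≤a₂≤1, 0≤a₃≤q₀−1, a₄≥0, f≥0, σ≤q−2}; F₂ = {ν+(n+1)q₀q+1 : 1≤n≤2q₀−2, 0≤a₁≤q₀−1, 0≤a₂≤1, 0≤a₃≤q₀−1, 0≤a₄≤q−q₀−1−nq₀, f≥0, σ=q−q₀−2−nq₀+n}; F₃ = {ν+(2n+1)q₀q+n+2 : 0≤n≤q₀−2, 0≤a₁≤q₀−2−n, 0≤a₂≤1, 0≤a₃≤q₀−1, 0≤a₄≤q₀−1, f≥0,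 σ=q−q₀−2−2nq₀+n}; F₄ = {ν+(2n+2)q₀q+n+3 : 0≤n≤q₀−3, 0≤a₁≤q₀−3−n, 0≤a₂≤1, 0≤a₃≤q₀−1, 0≤a₄≤q₀−1, f≥0, σ=q−2q₀−2−2nq₀+n}; F₅ = {ν+cq₀(q+1)+d(2qq₀+2q₀+1)+1 : a₁=0, 0≤c≤1, 0≤a₂≤1−c, 1−c≤d≤q₀−1, 0≤a₃≤q₀−1−d, 0≤a₄≤q₀−1, f≥0, σ=q−2−2dq₀−cq₀}; F₆ = {ν+q₀+(2n+2)q₀q+n+2 : a₁=0, a₂=0, 0≤n≤q₀−2, 0≤a₃≤n, 0≤a₄≤q₀−1, f≥0, σ=q−2q₀−2−2nq₀+n}. Then the union F = F₁ ∪ F₂ ∪ F₃ ∪ F₄ ∪ F₅ ∪ F₆ has exactly q(q−1)²/2 elements. -/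
/-- `ν = a₁ + a₂q₀ + 2a₃q₀ + a₄q + fq²`. -/
def nuF (q₀ q a₁ a₂ a₃ a₄ f : ℕ) : ℕ :=
  a₁ + a₂ * q₀ + 2 * a₃ * q₀ + a₄ * q + f * q ^ 2

/-- `F₁ = {ν+1 : 0≤a₁≤q₀−1, 0≤a₂≤1, 0≤a₃≤q₀−1, a₄≥0, f≥0, σ≤q−2}`. -/
def F1 (q₀ q : ℕ) : Set ℕ :=
  {v | ∃ a₁ a₂ a₃ a₄ f : ℕ,
    a₁ + 1 ≤ q₀ ∧ a₂ ≤ 1 ∧ a₃ + 1 ≤ q₀ ∧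
    a₁ + a₂ + a₃ + a₄ + f + 2 ≤ q ∧
    v = nuF q₀ q a₁ a₂ a₃ a₄ f + 1}

/-- `F₂ = {ν+(n+1)q₀q+1 : 1≤n≤2q₀−2, 0≤a₁≤q₀−1, 0≤a₂≤1, 0≤a₃≤q₀−1,
0≤a₄≤q−q₀−1−nq₀, f≥0, σ=q−q₀−2−nq₀+n}` (bounds and the equation for `σ`
written additively to avoid truncated subtraction). -/
def F2 (q₀ q : ℕ) : Set ℕ :=
  {v | ∃ n a₁ a₂ a₃ a₄ f : ℕ,
    1 ≤ n ∧ n + 2 ≤ 2 * q₀ ∧ a₁ + 1 ≤ q₀ ∧ a₂ ≤ 1 ∧ a₃ + 1 ≤ q₀ ∧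
    a₄ + n * q₀ + q₀ + 1 ≤ q ∧
    a₁ + a₂ + a₃ + a₄ + f + q₀ + 2 + n * q₀ = q + n ∧
    v = nuF q₀ q a₁ a₂ a₃ a₄ f + (n + 1) * q₀ * q + 1}

/-- `F₃ = {ν+(2n+1)q₀q+n+2 : 0≤n≤q₀−2, 0≤a₁≤q₀−2−n, 0≤a₂≤1, 0≤a₃≤q₀−1,
0≤a₄≤q₀−1, f≥0, σ=q−q₀−2−2nq₀+n}`. -/
def F3 (q₀ q : ℕ) : Set ℕ :=
  {v | ∃ n a₁ a₂ a₃ a₄ f : ℕ,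
    n + 2 ≤ q₀ ∧ a₁ + n + 2 ≤ q₀ ∧ a₂ ≤ 1 ∧ a₃ + 1 ≤ q₀ ∧ a₄ + 1 ≤ q₀ ∧
    a₁ + a₂ + a₃ + a₄ + f + q₀ + 2 + 2 * n * q₀ = q + n ∧
    v = nuF q₀ q a₁ a₂ a₃ a₄ f + (2 * n + 1) * q₀ * q + n + 2}

/-- `F₄ = {ν+(2n+2)q₀q+n+3 : 0≤n≤q₀−3, 0≤a₁≤q₀−3−n, 0≤a₂≤1, 0≤a₃≤q₀−1,
0≤a₄≤q₀−1, f≥0, σ=q−2q₀−2−2nq₀+n}`. -/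
def F4 (q₀ q : ℕ) : Set ℕ :=
  {v | ∃ n a₁ a₂ a₃ a₄ f : ℕ,
    n + 3 ≤ q₀ ∧ a₁ + n + 3 ≤ q₀ ∧ a₂ ≤ 1 ∧ a₃ + 1 ≤ q₀ ∧ a₄ + 1 ≤ q₀ ∧
    a₁ + a₂ + a₃ + a₄ + f + 2 * q₀ + 2 + 2 * n * q₀ = q + n ∧
    v = nuF q₀ q a₁ a₂ a₃ a₄ f + (2 * n + 2) * q₀ * q + n + 3}

/-- `F₅ = {ν+cq₀(q+1)+d(2qq₀+2q₀+1)+1 : a₁=0, 0≤c≤1, 0≤a₂≤1−c, 1−c≤d≤q₀−1,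
0≤a₃≤q₀−1−d, 0≤a₄≤q₀−1, f≥0, σ=q−2−2dq₀−cq₀}`. -/
def F5 (q₀ q : ℕ) : Set ℕ :=
  {v | ∃ c d a₁ a₂ a₃ a₄ f : ℕ,
    a₁ = 0 ∧ c ≤ 1 ∧ a₂ + c ≤ 1 ∧ 1 ≤ d + c ∧ d + 1 ≤ q₀ ∧
    a₃ + d + 1 ≤ q₀ ∧ a₄ + 1 ≤ q₀ ∧
    a₁ + a₂ + a₃ + a₄ + f + 2 + 2 * d * q₀ + c * q₀ = q ∧
    v = nuF q₀ q a₁ a₂ a₃ a₄ f + c * q₀ * (q + 1) + d * (2 * q * q₀ + 2 * q₀ + 1) + 1}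

/-- `F₆ = {ν+q₀+(2n+2)q₀q+n+2 : a₁=0, a₂=0, 0≤n≤q₀−2, 0≤a₃≤n, 0≤a₄≤q₀−1,
f≥0, σ=q−2q₀−2−2nq₀+n}`. -/
def F6 (q₀ q : ℕ) : Set ℕ :=
  {v | ∃ n a₁ a₂ a₃ a₄ f : ℕ,
    a₁ = 0 ∧ a₂ = 0 ∧ n + 2 ≤ q₀ ∧ a₃ ≤ n ∧ a₄ + 1 ≤ q₀ ∧
    a₁ + a₂ + a₃ + a₄ + f + 2 * q₀ + 2 + 2 * n * q₀ = q + n ∧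
    v = nuF q₀ q a₁ a₂ a₃ a₄ f + q₀ + (2 * n + 2) * q₀ * q + n + 2}

/-!
Write `v - 1` in base `q`, with `q₀`-adic digits refining the two lowest `q`-digits:
`v - 1 = (b₁ + b₂ q₀ + 2 b₃ q₀) + (m q₀ + b₄) q + f q²`. Then `v` lies in `F` exactly when the
excess `b₁ + b₂ + b₃ + (m q₀ + b₄) + f + 2 - q` is at most `m`, and strictly less than `m` if
`2 b₁ + b₂ + [b₁ ≤ b₃] ≤ m`: excess `≤ 0` is `F₁`, excess strictly between `0` and `m` is `F₂`,
and positive excess `m` splits into `F₃, …, F₆`.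

For fixed digits the admissible `f` form an initial segment of `ℕ`. Complementing all digits pairs
the `q²` digit tuples so that the lengths of two paired segments add up to `q - 2`, or to `q - 1`
for the `q` tuples with `b₁ = b₃` and `m = 2 b₁ + b₂`. Hence `2 |F| = q² (q - 2) + q = q (q - 1)²`.
-/

theorem fin_add_mul_inj {n : ℕ} {x y : Fin n} {i j : ℕ} (h : (x : ℕ) + n * i = y + n * j) :
    x = y ∧ i = j := by
  have : NeZero n := x.neZero
  have hpair : (i, x) = (j, y) := (Nat.divModEquiv n).symm.injective <| by
    simpa only [Nat.divModEquiv_symm_apply, mul_comm, add_comm] using h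
  exact ⟨congrArg Prod.snd hpair, congrArg Prod.fst hpair⟩

/-- A refinement of the two lowest base-`q` digits of a number, where `q = 2 * q₀ ^ 2`: the lowest
one is `b₁ + b₂ * q₀ + 2 * b₃ * q₀` and the next one is `m * q₀ + b₄`. -/
@[ext]
structure Digits (q₀ : ℕ) where
  b₁ : Fin q₀
  b₂ : Fin 2
  b₃ : Fin q₀
  b₄ : Fin q₀
  m : Fin (2 * q₀)

namespace Digits

variable {q₀ : ℕ}

/-- The digit tuples as a product of five finite types; it serves to count them. -/
def equivProd (q₀ : ℕ) :
    Digits q₀ ≃ Fin q₀ × Fin 2 × Fin q₀ × Fin q₀ × Fin (2 * q₀) where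
  toFun d := (d.b₁, d.b₂, d.b₃, d.b₄, d.m)
  invFun p := ⟨p.1, p.2.1, p.2.2.1, p.2.2.2.1, p.2.2.2.2⟩

instance : Fintype (Digits q₀) := Fintype.ofEquiv _ (equivProd q₀).symm

theorem card_eq (q₀ : ℕ) : Fintype.card (Digits q₀) = (2 * q₀ ^ 2) ^ 2 := by
  rw [Fintype.card_congr (equivProd q₀)]
  simp only [Fintype.card_prod, Fintype.card_fin]
  ring

/-- The number whose two lowest base-`q` digits are given by `d` and whose remaining part is `f`,
shifted by one as in the definition of the sets `Fᵢ`. -/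
def value (d : Digits q₀) (f : ℕ) : ℕ :=
  nuF q₀ (2 * q₀ ^ 2) d.b₁ d.b₂ d.b₃ (d.m * q₀ + d.b₄) f + 1

theorem value_inj {d d' : Digits q₀} {f f' : ℕ} (h : d.value f = d'.value f') :
    d = d' ∧ f = f' := by
  have mixed_radix (d : Digits q₀) (f : ℕ) : d.value f =
      d.b₁ + q₀ * (d.b₂ + 2 * (d.b₃ + q₀ * (d.b₄ + q₀ * (d.m + (2 * q₀) * f)))) + 1 := by
    unfold value nuF
    ring
  rw [mixed_radix, mixed_radix] at h
  obtain ⟨hb₁, h⟩ := fin_add_mul_inj (Nat.succ_injective h)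
  obtain ⟨hb₂, h⟩ := fin_add_mul_inj h
  obtain ⟨hb₃, h⟩ := fin_add_mul_inj h
  obtain ⟨hb₄, h⟩ := fin_add_mul_inj h
  obtain ⟨hm, hf⟩ := fin_add_mul_inj h
  exact ⟨Digits.ext hb₁ hb₂ hb₃ hb₄ hm, hf⟩

/-- The part of `σ = a₁ + a₂ + a₃ + a₄ + f` contributed by the digits, i.e. `σ - f`. -/
def weight (d : Digits q₀) : ℕ :=
  d.b₁ + d.b₂ + d.b₃ + (d.m * q₀ + d.b₄)

/-- The least `m` for which the excess is not allowed to be equal to `m`. -/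
def threshold (d : Digits q₀) : ℕ :=
  2 * d.b₁ + d.b₂ + if d.b₁ ≤ d.b₃ then 1 else 0

/-- The amount by which the excess `weight + f + 2 - q` has to stay below `m`. -/
def penalty (d : Digits q₀) : ℕ :=
  if d.threshold ≤ d.m then 1 else 0

/-- The number of admissible leading parts `f` over the digits `d`. The subtraction does not
truncate, see `multiplicity_add`. -/
def multiplicity (d : Digits q₀) : ℕ :=
  2 * q₀ ^ 2 - 1 + d.m - (d.weight + d.penalty)

theorem penalty_le_one (d : Digits q₀) : d.penalty ≤ 1 := by
  unfold penalty
  split_ifs <;> omega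

theorem penalty_le_m (d : Digits q₀) : d.penalty ≤ d.m := by
  unfold penalty threshold
  split_ifs <;> omega

theorem penalty_eq_zero_iff {d : Digits q₀} : d.penalty = 0 ↔ d.m < d.threshold := by
  simp [penalty]

theorem lt_multiplicity_iff {d : Digits q₀} {f : ℕ} :
    f < d.multiplicity ↔ d.weight + f + d.penalty + 2 ≤ 2 * q₀ ^ 2 + d.m := by
  have hq : 0 < q₀ ^ 2 := pow_pos d.b₁.pos 2
  unfold multiplicity
  omega

theorem lowDigits_add_penalty_lt (d : Digits q₀) :
    (d.b₁ : ℕ) + d.b₂ + d.b₃ + d.penalty < 2 * q₀ := by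
  unfold penalty threshold
  simp only [Fin.le_def]
  split_ifs <;> omega

theorem multiplicity_add (d : Digits q₀) :
    d.multiplicity + d.weight + d.penalty + 1 = 2 * q₀ ^ 2 + d.m := by
  have hlow := d.lowDigits_add_penalty_lt
  have hm : (d.m : ℕ) + 1 ≤ 2 * q₀ := d.m.isLt
  have hb₄ : (d.b₄ : ℕ) + 1 ≤ q₀ := d.b₄.isLt
  have hprod : (d.m : ℕ) * q₀ + 2 * q₀ + q₀ ≤ d.m + 1 + 2 * q₀ ^ 2 := by nlinarith
  have hle : d.weight + d.penalty + 1 ≤ 2 * q₀ ^ 2 + d.m := by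
    unfold weight
    omega
  have hq : 0 < q₀ ^ 2 := pow_pos d.b₁.pos 2
  unfold multiplicity
  omega

/-- The involution replacing every digit by its complement. -/
def rev (d : Digits q₀) : Digits q₀ :=
  ⟨d.b₁.rev, d.b₂.rev, d.b₃.rev, d.b₄.rev, d.m.rev⟩

theorem rev_involutive : Function.Involutive (rev (q₀ := q₀)) := fun d => by
  simp only [rev, Fin.rev_rev]

/-- The digit tuples at which complementation does not exchange penalties `0` and `1`. -/
def IsBalanced (d : Digits q₀) : Prop :=
  d.b₁ = d.b₃ ∧ (d.m : ℕ) = 2 * d.b₁ + d.b₂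

instance : DecidablePred (IsBalanced (q₀ := q₀)) := fun _ => instDecidableAnd

/-- A balanced digit tuple is determined by `b₁`, `b₂` and `b₄`, which are arbitrary. -/
def balancedEquiv (q₀ : ℕ) : {d : Digits q₀ // d.IsBalanced} ≃ Fin q₀ × Fin 2 × Fin q₀ where
  toFun d := (d.1.b₁, d.1.b₂, d.1.b₄)
  invFun p := ⟨⟨p.1, p.2.1, p.1, p.2.2, ⟨2 * p.1 + p.2.1, by omega⟩⟩, rfl, rfl⟩
  left_inv := fun ⟨_, hb, hm⟩ => Subtype.ext (Digits.ext rfl rfl hb rfl (Fin.ext hm.symm))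

theorem card_isBalanced (q₀ : ℕ) :
    (Finset.univ.filter (IsBalanced (q₀ := q₀))).card = 2 * q₀ ^ 2 := by
  rw [← Fintype.card_subtype, Fintype.card_congr (balancedEquiv q₀)]
  simp only [Fintype.card_prod, Fintype.card_fin]
  ring

theorem weight_add_weight_rev (d : Digits q₀) :
    d.weight + d.rev.weight + 2 = 2 * q₀ ^ 2 + 2 * q₀ := by
  have hm : (d.m : ℕ) + d.m.rev + 1 = 2 * q₀ := by simp only [Fin.val_rev]; omega
  have hprod : (d.m : ℕ) * q₀ + d.m.rev * q₀ + q₀ = 2 * q₀ ^ 2 := by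
    linear_combination q₀ * hm
  simp only [weight, rev, Fin.val_rev] at hprod ⊢
  omega

theorem penalty_add_penalty_rev (d : Digits q₀) :
    d.penalty + d.rev.penalty + (if d.IsBalanced then 1 else 0) = 1 := by
  simp only [penalty, threshold, rev, IsBalanced, Fin.le_def, Fin.ext_iff, Fin.val_rev]
  split_ifs <;> omega

theorem multiplicity_add_multiplicity_rev (d : Digits q₀) :
    d.multiplicity + d.rev.multiplicity + 2 = 2 * q₀ ^ 2 + if d.IsBalanced then 1 else 0 := by
  have hd := d.multiplicity_add
  have hrev := d.rev.multiplicity_add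
  have hweight := d.weight_add_weight_rev
  have hpenalty := d.penalty_add_penalty_rev
  have hm : (d.m : ℕ) + d.rev.m + 1 = 2 * q₀ := by simp only [rev, Fin.val_rev]; omega
  omega

theorem two_mul_sum_multiplicity (q₀ : ℕ) :
    2 * ∑ d : Digits q₀, d.multiplicity = 2 * q₀ ^ 2 * (2 * q₀ ^ 2 - 1) ^ 2 := by
  have sum_rev : ∑ d : Digits q₀, d.rev.multiplicity = ∑ d : Digits q₀, d.multiplicity :=
    rev_involutive.bijective.sum_comp multiplicity
  have sum_pairs : 2 * ∑ d : Digits q₀, d.multiplicity + (2 * q₀ ^ 2) ^ 2 * 2 =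
      (2 * q₀ ^ 2) ^ 2 * (2 * q₀ ^ 2) + 2 * q₀ ^ 2 :=
    calc 2 * ∑ d : Digits q₀, d.multiplicity + (2 * q₀ ^ 2) ^ 2 * 2
      _ = ∑ d : Digits q₀, (d.multiplicity + d.rev.multiplicity + 2) := by
        simp only [Finset.sum_add_distrib, sum_rev, Finset.sum_const, Finset.card_univ, card_eq,
          smul_eq_mul, two_mul]
      _ = ∑ d : Digits q₀, (2 * q₀ ^ 2 + if d.IsBalanced then 1 else 0) :=
        Finset.sum_congr rfl fun d _ => d.multiplicity_add_multiplicity_rev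
      _ = (2 * q₀ ^ 2) ^ 2 * (2 * q₀ ^ 2) + 2 * q₀ ^ 2 := by
        rw [Finset.sum_add_distrib, Finset.sum_boole, card_isBalanced, Finset.sum_const,
          Finset.card_univ, card_eq, smul_eq_mul, Nat.cast_id]
  generalize 2 * q₀ ^ 2 = q at sum_pairs ⊢
  cases q with
  | zero => omega
  | succ p =>
    rw [Nat.add_sub_cancel]
    linarith

/-- The values `d.value f` over all admissible pairs `(d, f)`; it is the union of the `Fᵢ`, written
with unique representations. -/
def admissibleSet (q₀ : ℕ) : Set ℕ :=
  Set.range fun p : Σ d : Digits q₀, Fin d.multiplicity => p.1.value p.2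

theorem mem_admissibleSet_iff {v : ℕ} : v ∈ admissibleSet q₀ ↔ ∃ (d : Digits q₀) (f : ℕ),
    d.weight + f + d.penalty + 2 ≤ 2 * q₀ ^ 2 + d.m ∧ d.value f = v := by
  simp only [admissibleSet, Set.mem_range, Sigma.exists, Fin.exists_iff, lt_multiplicity_iff,
    exists_prop]

theorem ncard_admissibleSet (q₀ : ℕ) :
    (admissibleSet q₀).ncard = ∑ d : Digits q₀, d.multiplicity := by
  have value_injective :
      Function.Injective fun p : Σ d : Digits q₀, Fin d.multiplicity => p.1.value p.2 := by
    rintro ⟨d, f⟩ ⟨d', f'⟩ h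
    obtain ⟨hd, hf⟩ := value_inj h
    cases hd
    cases Fin.ext hf
    rfl
  rw [admissibleSet, Set.ncard_range_of_injective value_injective, Nat.card_sigma]
  simp only [Nat.card_fin]

theorem F1_subset_admissibleSet : F1 q₀ (2 * q₀ ^ 2) ⊆ admissibleSet q₀ := by
  rintro _ ⟨a₁, a₂, a₃, a₄, f, ha₁, ha₂, ha₃, hσ, rfl⟩
  have hm : a₄ / q₀ < 2 * q₀ := Nat.div_lt_of_lt_mul (by linarith)
  let d : Digits q₀ := ⟨⟨a₁, ha₁⟩, ⟨a₂, by omega⟩, ⟨a₃, ha₃⟩, ⟨a₄ % q₀, Nat.mod_lt _ (by omega)⟩,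
    ⟨a₄ / q₀, hm⟩⟩
  have ha₄ : (d.m : ℕ) * q₀ + d.b₄ = a₄ := Nat.div_add_mod' a₄ q₀
  refine mem_admissibleSet_iff.2 ⟨d, f, ?_, ?_⟩
  · have hpenalty := d.penalty_le_m
    rw [weight, ha₄]
    dsimp only [d] at hpenalty ⊢
    omega
  · rw [value, ha₄]

theorem F2_subset_admissibleSet : F2 q₀ (2 * q₀ ^ 2) ⊆ admissibleSet q₀ := by
  rintro _ ⟨n, a₁, a₂, a₃, a₄, f, -, -, ha₁, ha₂, ha₃, ha₄, hσ, rfl⟩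
  have hq₀ : 0 < q₀ := by omega
  have hm : a₄ / q₀ + (n + 1) < 2 * q₀ := by
    rw [← Nat.add_mul_div_right _ _ hq₀]
    exact Nat.div_lt_of_lt_mul (by linarith)
  let d : Digits q₀ := ⟨⟨a₁, ha₁⟩, ⟨a₂, by omega⟩, ⟨a₃, ha₃⟩, ⟨a₄ % q₀, Nat.mod_lt _ hq₀⟩,
    ⟨a₄ / q₀ + (n + 1), hm⟩⟩
  have hx : (d.m : ℕ) * q₀ + d.b₄ = a₄ + (n + 1) * q₀ := by
    linear_combination Nat.div_add_mod' a₄ q₀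
  refine mem_admissibleSet_iff.2 ⟨d, f, ?_, ?_⟩
  · have hpenalty := d.penalty_le_one
    rw [weight, hx]
    dsimp only [d] at hpenalty ⊢
    linarith [Nat.zero_le (a₄ / q₀)]
  · rw [value, hx]
    unfold nuF
    ring

theorem mem_admissibleSet_of_excess_eq {v f : ℕ} (d : Digits q₀) (hm : d.m < d.threshold)
    (hexcess : d.weight + f + 2 = 2 * q₀ ^ 2 + d.m) (hv : d.value f = v) : v ∈ admissibleSet q₀ :=
  mem_admissibleSet_iff.2 ⟨d, f, by rw [penalty_eq_zero_iff.2 hm]; omega, hv⟩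

theorem F3_subset_admissibleSet : F3 q₀ (2 * q₀ ^ 2) ⊆ admissibleSet q₀ := by
  rintro _ ⟨n, a₁, a₂, a₃, a₄, f, hn, ha₁, ha₂, ha₃, ha₄, hσ, rfl⟩
  refine mem_admissibleSet_of_excess_eq (f := f) ⟨⟨a₁ + n + 1, by omega⟩, ⟨a₂, by omega⟩,
    ⟨a₃, ha₃⟩, ⟨a₄, ha₄⟩, ⟨2 * n + 1, by omega⟩⟩ ?_ ?_ ?_
  · dsimp only [threshold]; omega
  · dsimp only [weight]; linarith
  · dsimp only [value, nuF]; ring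

theorem F4_subset_admissibleSet : F4 q₀ (2 * q₀ ^ 2) ⊆ admissibleSet q₀ := by
  rintro _ ⟨n, a₁, a₂, a₃, a₄, f, hn, ha₁, ha₂, ha₃, ha₄, hσ, rfl⟩
  refine mem_admissibleSet_of_excess_eq (f := f) ⟨⟨a₁ + n + 2, by omega⟩, ⟨a₂, by omega⟩,
    ⟨a₃, ha₃⟩, ⟨a₄, ha₄⟩, ⟨2 * n + 2, by omega⟩⟩ ?_ ?_ ?_
  · dsimp only [threshold]; omega
  · dsimp only [weight]; linarith
  · dsimp only [value, nuF]; ring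

theorem F5_subset_admissibleSet : F5 q₀ (2 * q₀ ^ 2) ⊆ admissibleSet q₀ := by
  rintro _ ⟨c, d, _, a₂, a₃, a₄, f, rfl, -, ha₂, -, hd, ha₃, ha₄, hσ, rfl⟩
  refine mem_admissibleSet_of_excess_eq (f := f) ⟨⟨d, hd⟩, ⟨a₂ + c, by omega⟩,
    ⟨a₃ + d, by omega⟩, ⟨a₄, ha₄⟩, ⟨2 * d + c, by omega⟩⟩ ?_ ?_ ?_
  · simp only [threshold, Fin.le_def, Nat.le_add_left, if_true]; omega
  · dsimp only [weight]; linarith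
  · dsimp only [value, nuF]; ring

theorem F6_subset_admissibleSet : F6 q₀ (2 * q₀ ^ 2) ⊆ admissibleSet q₀ := by
  rintro _ ⟨n, _, _, a₃, a₄, f, rfl, rfl, hn, ha₃, ha₄, hσ, rfl⟩
  refine mem_admissibleSet_of_excess_eq (f := f) ⟨⟨n + 1, by omega⟩, 1,
    ⟨a₃, by omega⟩, ⟨a₄, ha₄⟩, ⟨2 * n + 2, by omega⟩⟩ ?_ ?_ ?_
  · dsimp only [threshold, Fin.val_one]; omega
  · dsimp only [weight, Fin.val_one]; linarith
  · dsimp only [value, nuF, Fin.val_one]; ring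

variable {d : Digits q₀} {f : ℕ}

theorem value_mem_F1 (hσ : d.weight + f + 2 ≤ 2 * q₀ ^ 2) : d.value f ∈ F1 q₀ (2 * q₀ ^ 2) :=
  ⟨d.b₁, d.b₂, d.b₃, d.m * q₀ + d.b₄, f, d.b₁.isLt, by omega, d.b₃.isLt, hσ, rfl⟩

theorem value_mem_F2 {n : ℕ} (hn : 1 ≤ n) (hnm : n < d.m)
    (hexcess : d.weight + f + 2 = 2 * q₀ ^ 2 + n) : d.value f ∈ F2 q₀ (2 * q₀ ^ 2) := by
  obtain ⟨j, hj⟩ : ∃ j, (d.m : ℕ) = n + 1 + j := Nat.exists_eq_add_of_le hnm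
  have hm := d.m.isLt
  have hb₄ := d.b₄.isLt
  rw [weight, hj] at hexcess
  refine ⟨n, d.b₁, d.b₂, d.b₃, j * q₀ + d.b₄, f, hn, by omega, d.b₁.isLt, by omega, d.b₃.isLt,
    ?_, ?_, ?_⟩
  · nlinarith
  · linarith
  · rw [value, hj]
    unfold nuF
    ring

theorem value_mem_F3 {n : ℕ} (hm : (d.m : ℕ) = 2 * n + 1) (hb₁ : d.m < 2 * (d.b₁ : ℕ))
    (hexcess : d.weight + f + 2 = 2 * q₀ ^ 2 + d.m) : d.value f ∈ F3 q₀ (2 * q₀ ^ 2) := by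
  obtain ⟨a₁, ha₁⟩ : ∃ a₁, (d.b₁ : ℕ) = n + 1 + a₁ := Nat.exists_eq_add_of_le (by omega)
  rw [weight, hm, ha₁] at hexcess
  refine ⟨n, a₁, d.b₂, d.b₃, d.b₄, f, by omega, by omega, by omega, d.b₃.isLt, d.b₄.isLt, ?_, ?_⟩
  · linarith
  · rw [value, hm, ha₁]
    unfold nuF
    ring

theorem value_mem_F4 {n : ℕ} (hm : (d.m : ℕ) = 2 * n + 2) (hb₁ : d.m < 2 * (d.b₁ : ℕ))
    (hexcess : d.weight + f + 2 = 2 * q₀ ^ 2 + d.m) : d.value f ∈ F4 q₀ (2 * q₀ ^ 2) := by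
  obtain ⟨a₁, ha₁⟩ : ∃ a₁, (d.b₁ : ℕ) = n + 2 + a₁ := Nat.exists_eq_add_of_le (by omega)
  rw [weight, hm, ha₁] at hexcess
  refine ⟨n, a₁, d.b₂, d.b₃, d.b₄, f, by omega, by omega, by omega, d.b₃.isLt, d.b₄.isLt, ?_, ?_⟩
  · linarith
  · rw [value, hm, ha₁]
    unfold nuF
    ring

theorem value_mem_F5 (hm : 1 ≤ (d.m : ℕ)) (hb₁ : 2 * (d.b₁ : ℕ) ≤ d.m)
    (hb₂ : (d.m : ℕ) ≤ 2 * d.b₁ + d.b₂) (hb₃ : d.b₁ ≤ d.b₃)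
    (hexcess : d.weight + f + 2 = 2 * q₀ ^ 2 + d.m) : d.value f ∈ F5 q₀ (2 * q₀ ^ 2) := by
  obtain ⟨c, hc⟩ : ∃ c, (d.m : ℕ) = 2 * d.b₁ + c := Nat.exists_eq_add_of_le hb₁
  obtain ⟨a₂, ha₂⟩ : ∃ a₂, (d.b₂ : ℕ) = c + a₂ := Nat.exists_eq_add_of_le (by omega)
  obtain ⟨a₃, ha₃⟩ : ∃ a₃, (d.b₃ : ℕ) = d.b₁ + a₃ := Nat.exists_eq_add_of_le hb₃
  rw [weight, hc, ha₂, ha₃] at hexcess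
  refine ⟨c, d.b₁, 0, a₂, a₃, d.b₄, f, rfl, by omega, by omega, by omega, d.b₁.isLt, by omega,
    d.b₄.isLt, ?_, ?_⟩
  · linarith
  · rw [value, hc, ha₂, ha₃]
    unfold nuF
    ring

theorem value_mem_F6 (hm : (d.m : ℕ) = 2 * d.b₁) (hb₂ : d.b₂ = 1) (hb₃ : d.b₃ < d.b₁)
    (hexcess : d.weight + f + 2 = 2 * q₀ ^ 2 + d.m) : d.value f ∈ F6 q₀ (2 * q₀ ^ 2) := by
  obtain ⟨n, hn⟩ : ∃ n, (d.b₁ : ℕ) = n + 1 := Nat.exists_eq_add_one.2 (by omega)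
  rw [weight, hm, hb₂, hn, Fin.val_one] at hexcess
  refine ⟨n, 0, 0, d.b₃, d.b₄, f, rfl, rfl, by omega, by omega, d.b₄.isLt, ?_, ?_⟩
  · linarith
  · rw [value, hm, hb₂, hn, Fin.val_one]
    unfold nuF
    ring

theorem value_mem_F3_or_F4 (hm : 1 ≤ (d.m : ℕ)) (hb₁ : d.m < 2 * (d.b₁ : ℕ))
    (hexcess : d.weight + f + 2 = 2 * q₀ ^ 2 + d.m) :
    d.value f ∈ F3 q₀ (2 * q₀ ^ 2) ∨ d.value f ∈ F4 q₀ (2 * q₀ ^ 2) := by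
  rcases Nat.even_or_odd' d.m with ⟨j, heven | hodd⟩
  · exact .inr (value_mem_F4 (n := j - 1) (by omega) hb₁ hexcess)
  · exact .inl (value_mem_F3 hodd hb₁ hexcess)

theorem value_mem_F5_or_F6 (hm : 1 ≤ (d.m : ℕ)) (hb₁ : 2 * (d.b₁ : ℕ) ≤ d.m)
    (hthreshold : d.m < d.threshold) (hexcess : d.weight + f + 2 = 2 * q₀ ^ 2 + d.m) :
    d.value f ∈ F5 q₀ (2 * q₀ ^ 2) ∨ d.value f ∈ F6 q₀ (2 * q₀ ^ 2) := by
  unfold threshold at hthreshold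
  split_ifs at hthreshold with hb₃
  · exact .inl (value_mem_F5 hm hb₁ (by omega) hb₃ hexcess)
  · exact .inr (value_mem_F6 (by omega) (by omega) (not_le.1 hb₃) hexcess)

theorem admissibleSet_subset : admissibleSet q₀ ⊆
    F1 q₀ (2 * q₀ ^ 2) ∪ F2 q₀ (2 * q₀ ^ 2) ∪ F3 q₀ (2 * q₀ ^ 2) ∪ F4 q₀ (2 * q₀ ^ 2) ∪
      F5 q₀ (2 * q₀ ^ 2) ∪ F6 q₀ (2 * q₀ ^ 2) := by
  intro v hv
  obtain ⟨d, f, hadm, rfl⟩ := mem_admissibleSet_iff.1 hv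
  simp only [Set.mem_union]
  rcases le_or_gt (d.weight + f + 2) (2 * q₀ ^ 2) with hσ | hσ
  · have := value_mem_F1 hσ
    tauto
  obtain ⟨n, hexcess⟩ := Nat.exists_eq_add_of_le hσ.le
  rcases lt_or_ge n d.m with hnm | hnm
  · have := value_mem_F2 (by omega) hnm hexcess
    tauto
  obtain rfl : n = d.m := by omega
  have hthreshold : d.m < d.threshold := penalty_eq_zero_iff.1 (by omega)
  rcases lt_or_ge (d.m : ℕ) (2 * d.b₁) with hb₁ | hb₁
  · have := value_mem_F3_or_F4 (by omega) hb₁ hexcess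
    tauto
  · have := value_mem_F5_or_F6 (by omega) hb₁ hthreshold hexcess
    tauto

theorem union_eq_admissibleSet (q₀ : ℕ) :
    F1 q₀ (2 * q₀ ^ 2) ∪ F2 q₀ (2 * q₀ ^ 2) ∪ F3 q₀ (2 * q₀ ^ 2) ∪ F4 q₀ (2 * q₀ ^ 2) ∪
      F5 q₀ (2 * q₀ ^ 2) ∪ F6 q₀ (2 * q₀ ^ 2) = admissibleSet q₀ := by
  refine Set.Subset.antisymm ?_ admissibleSet_subset
  simp only [Set.union_subset_iff]
  exact ⟨⟨⟨⟨⟨F1_subset_admissibleSet, F2_subset_admissibleSet⟩, F3_subset_admissibleSet⟩,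
    F4_subset_admissibleSet⟩, F5_subset_admissibleSet⟩, F6_subset_admissibleSet⟩

end Digits

theorem stmt_13_general (q₀ q : ℕ) (hq : q = 2 * q₀ ^ 2) :
    (F1 q₀ q ∪ F2 q₀ q ∪ F3 q₀ q ∪ F4 q₀ q ∪ F5 q₀ q ∪ F6 q₀ q).ncard =
      q * (q - 1) ^ 2 / 2 := by
  subst hq
  rw [Digits.union_eq_admissibleSet, Digits.ncard_admissibleSet, ← Digits.two_mul_sum_multiplicity,
    Nat.mul_div_cancel_left _ two_pos]

/-- The union `F = F₁ ∪ F₂ ∪ F₃ ∪ F₄ ∪ F₅ ∪ F₆` has exactly `q(q−1)²/2` elements. -/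
theorem stmt_13 (s : ℕ) (hs : 1 ≤ s) (q₀ q : ℕ)
    (hq₀ : q₀ = 2 ^ s) (hq : q = 2 * q₀ ^ 2) :
    (F1 q₀ q ∪ F2 q₀ q ∪ F3 q₀ q ∪ F4 q₀ q ∪ F5 q₀ q ∪ F6 q₀ q).ncard =
      q * (q - 1) ^ 2 / 2 :=
  stmt_13_general q₀ q hq
end

section
/- Let s ≥ 1 be an integer, q₀ = 2^s and q = 2q₀². For nonnegative integers a₁,a₂,a₃,a₄,f write σ = a₁+a₂+a₃+a₄+f and ν = a₁ + a₂q₀ + 2a₃q₀ + a₄q + fq². Define the sets F₁,…,F₆ of natural numbers: F₁ = {ν+1 : 0≤a₁≤q₀−1, 0≤a₂≤1, 0≤a₃≤q₀−1, a₄≥0, f≥0, σ≤q−2}; F₂ = {ν+(n+1)q₀q+1 : 1≤n≤2q₀−2, 0≤a₁≤q₀−1, 0≤a₂≤1, 0≤a₃≤q₀−1, 0≤a₄≤q−q₀−1−nq₀, f≥0, σ=q−q₀−2−nq₀+n}; F₃ = {ν+(2n+1)q₀q+n+2 : 0≤n≤q₀−2, 0≤a₁≤q₀−2−n, 0≤a₂≤1,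 0≤a₃≤q₀−1, 0≤a₄≤q₀−1, f≥0, σ=q−q₀−2−2nq₀+n}; F₄ = {ν+(2n+2)q₀q+n+3 : 0≤n≤q₀−3, 0≤a₁≤q₀−3−n, 0≤a₂≤1, 0≤a₃≤q₀−1, 0≤a₄≤q₀−1, f≥0, σ=q−2q₀−2−2nq₀+n}; F₅ = {ν+cq₀(q+1)+d(2qq₀+2q₀+1)+1 : a₁=0, 0≤c≤1, 0≤a₂≤1−c, 1−c≤d≤q₀−1, 0≤a₃≤q₀−1−d, 0≤a₄≤q₀−1, f≥0, σ=q−2−2dq₀−cq₀}; F₆ = {ν+q₀+(2n+2)q₀q+n+2 : a₁=0, a₂=0, 0≤n≤q₀−2, 0≤a₃≤n, 0≤a₄≤q₀−1, f≥0, σ=q−2q₀−2−2nq₀+n}. Then the six sets F₁, F₂, F₃, F₄, F₅, F₆ are pairwise disjoint. -/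
/-!
The shifts in the definitions of `F₂, …, F₆` are absorbed into the coefficients of `ν`, so that
every member of a family has the form `ν + 1` for new coefficients with `a₁, a₃ < q₀`, `a₂ < 2`
and `a₄ < q`. Since `q = 2q₀²`, these are mixed-radix digits and hence unique. Let `k` be the
amount by which their sum exceeds `q - 2`. The family is read off the new digits:
* `F₁`: `k = 0`;
* `F₂`: `k ≥ 1` and `a₄ ≥ (k + 1)q₀`, whereas `k ≥ 1` and `a₄ < (k + 1)q₀` in `F₃, …, F₆`;
* `F₃`, `F₄`: `k < 2a₁`, with `k` odd, respectively even;
* `F₅`, `F₆`: `2a₁ ≤ k`, with `a₁ ≤ a₃`, respectively `a₃ < a₁`.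
-/

theorem pairwise_disjoint_of_forall₂_mapsTo {α ι : Type*} {g : α → ι} {sets : List (Set α)}
    {labels : List ι} (hg : List.Forall₂ (fun S i => Set.MapsTo g S {i}) sets labels)
    (hlabels : labels.Nodup) : sets.Pairwise Disjoint := by
  obtain ⟨hlen, hg⟩ := List.forall₂_iff_get.1 hg
  refine List.pairwise_iff_getElem.2 fun i j hi hj hij => Set.disjoint_left.2 fun v hvi hvj => ?_
  have label_eq : labels[i] = labels[j] :=
    (hg i hi (hlen ▸ hi) hvi).symm.trans (hg j hj (hlen ▸ hj) hvj)
  exact hij.ne (hlabels.getElem_inj_iff.1 label_eq)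

/-- The digits of a number in the mixed-radix system with place values `1, q₀, 2q₀, q, q²`. -/
structure MixedDigits where
  a₁ : ℕ
  a₂ : ℕ
  a₃ : ℕ
  a₄ : ℕ
  f : ℕ

/-- The mixed-radix digits of `v - 1`, extracted greedily with radices `q₀, 2, q₀, q`. The shift
by one is the one in the definitions of the families, all of whose members are positive. -/
def predDigits (q₀ q v : ℕ) : MixedDigits where
  a₁ := (v - 1) % q₀
  a₂ := (v - 1) / q₀ % 2
  a₃ := (v - 1) / q₀ / 2 % q₀
  a₄ := (v - 1) / q₀ / 2 / q₀ % q
  f := (v - 1) / q₀ / 2 / q₀ / q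

namespace MixedDigits

/-- The digit sum in excess of `q - 2`; truncated subtraction makes it `0` when the digit sum is
at most `q - 2`. -/
def excess (q : ℕ) (D : MixedDigits) : ℕ :=
  D.a₁ + D.a₂ + D.a₃ + D.a₄ + D.f + 2 - q

/-- The index `i` of the only family `Fᵢ` that can contain a number `v` such that `v - 1` has
digits `D`. -/
def familyIndex (q₀ q : ℕ) (D : MixedDigits) : ℕ :=
  if D.excess q = 0 then 1
  else if (D.excess q + 1) * q₀ ≤ D.a₄ then 2
  else if D.excess q < 2 * D.a₁ then if Odd (D.excess q) then 3 else 4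
  else if D.a₁ ≤ D.a₃ then 5 else 6

end MixedDigits

section

variable {q₀ q a₁ a₂ a₃ a₄ f k v : ℕ}

open MixedDigits

theorem predDigits_nuF_add_one (hq : q = 2 * q₀ ^ 2) (h₁ : a₁ < q₀) (h₂ : a₂ < 2) (h₃ : a₃ < q₀)
    (h₄ : a₄ < q) : predDigits q₀ q (nuF q₀ q a₁ a₂ a₃ a₄ f + 1) = ⟨a₁, a₂, a₃, a₄, f⟩ := by
  have nested : nuF q₀ q a₁ a₂ a₃ a₄ f = a₁ + q₀ * (a₂ + 2 * (a₃ + q₀ * (a₄ + q * f))) := by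
    rw [nuF, hq]; ring
  have div_radix {r x y : ℕ} (hx : x < r) : (x + r * y) / r = y := by
    rw [Nat.add_mul_div_left _ _ (by omega), Nat.div_eq_of_lt hx, zero_add]
  have mod_radix {r x y : ℕ} (hx : x < r) : (x + r * y) % r = x := by
    rw [Nat.add_mul_mod_self_left, Nat.mod_eq_of_lt hx]
  simp only [predDigits, nested, Nat.add_sub_cancel, div_radix h₁, div_radix h₂, div_radix h₃,
    div_radix h₄, mod_radix h₁, mod_radix h₂, mod_radix h₃, mod_radix h₄]

theorem familyIndex_predDigits_of_eq_nuF_add_mul (hq : q = 2 * q₀ ^ 2) (hk : k ≠ 0)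
    (hkq : k < 2 * q₀) (h₁ : a₁ < q₀) (h₂ : a₂ < 2) (h₃ : a₃ < q₀) (h₄ : a₄ < q₀)
    (hsum : a₁ + a₂ + a₃ + (a₄ + k * q₀) + f + 2 = q + k)
    (hv : v = nuF q₀ q a₁ a₂ a₃ (a₄ + k * q₀) f + 1) :
    familyIndex q₀ q (predDigits q₀ q v) =
      if k < 2 * a₁ then if Odd k then 3 else 4 else if a₁ ≤ a₃ then 5 else 6 := by
  have a₄_lt : a₄ + k * q₀ < (k + 1) * q₀ := by rw [add_one_mul]; omega
  have a₄_lt_q : a₄ + k * q₀ < q := calc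
    a₄ + k * q₀ < (k + 1) * q₀ := a₄_lt
    _ ≤ 2 * q₀ * q₀ := Nat.mul_le_mul_right _ hkq
    _ = q := by rw [hq]; ring
  have excess_eq : excess q ⟨a₁, a₂, a₃, a₄ + k * q₀, f⟩ = k := by
    simp only [excess]; omega
  rw [hv, predDigits_nuF_add_one hq h₁ h₂ h₃ a₄_lt_q, familyIndex, excess_eq, if_neg hk,
    if_neg a₄_lt.not_ge]

theorem mapsTo_familyIndex_F1 (hq : q = 2 * q₀ ^ 2) :
    Set.MapsTo (familyIndex q₀ q ∘ predDigits q₀ q) (F1 q₀ q) {1} := by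
  rintro v ⟨a₁, a₂, a₃, a₄, f, h₁, h₂, h₃, hsum, rfl⟩
  have excess_eq : excess q ⟨a₁, a₂, a₃, a₄, f⟩ = 0 := Nat.sub_eq_zero_of_le hsum
  have digits_eq := predDigits_nuF_add_one (f := f) hq h₁ (Nat.lt_succ_of_le h₂) h₃
    (show a₄ < q by omega)
  simp only [Set.mem_singleton_iff, Function.comp_apply, digits_eq, familyIndex, excess_eq, if_true]

theorem mapsTo_familyIndex_F2 (hq : q = 2 * q₀ ^ 2) :
    Set.MapsTo (familyIndex q₀ q ∘ predDigits q₀ q) (F2 q₀ q) {2} := by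
  rintro v ⟨n, a₁, a₂, a₃, a₄, f, hn, -, h₁, h₂, h₃, h₄, hsum, hv⟩
  have shift : v = nuF q₀ q a₁ a₂ a₃ (a₄ + (n + 1) * q₀) f + 1 := by
    rw [hv, nuF, nuF]; ring
  have digits_eq := predDigits_nuF_add_one (f := f) hq h₁ (Nat.lt_succ_of_le h₂) h₃
    (show a₄ + (n + 1) * q₀ < q by rw [add_one_mul]; omega)
  have excess_eq : excess q ⟨a₁, a₂, a₃, a₄ + (n + 1) * q₀, f⟩ = n := by
    simp only [excess, add_one_mul]; omega
  simp only [Set.mem_singleton_iff, Function.comp_apply, shift, digits_eq, familyIndex, excess_eq,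
    if_neg (show n ≠ 0 by omega), if_pos (Nat.le_add_left _ a₄)]

theorem mapsTo_familyIndex_F3 (hq : q = 2 * q₀ ^ 2) :
    Set.MapsTo (familyIndex q₀ q ∘ predDigits q₀ q) (F3 q₀ q) {3} := by
  rintro v ⟨n, a₁, a₂, a₃, a₄, f, -, h₁, h₂, h₃, h₄, hsum, hv⟩
  have shift : v = nuF q₀ q (a₁ + n + 1) a₂ a₃ (a₄ + (2 * n + 1) * q₀) f + 1 := by
    rw [hv, nuF, nuF]; ring
  have digit_sum : a₁ + n + 1 + a₂ + a₃ + (a₄ + (2 * n + 1) * q₀) + f + 2 = q + (2 * n + 1) := by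
    linarith
  have excess_lt : 2 * n + 1 < 2 * (a₁ + n + 1) := by omega
  have index_eq := familyIndex_predDigits_of_eq_nuF_add_mul hq (by omega) (by omega) (by omega)
    (by omega) h₃ h₄ digit_sum shift
  rwa [if_pos excess_lt, if_pos (odd_two_mul_add_one n)] at index_eq

theorem mapsTo_familyIndex_F4 (hq : q = 2 * q₀ ^ 2) :
    Set.MapsTo (familyIndex q₀ q ∘ predDigits q₀ q) (F4 q₀ q) {4} := by
  rintro v ⟨n, a₁, a₂, a₃, a₄, f, -, h₁, h₂, h₃, h₄, hsum, hv⟩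
  have shift : v = nuF q₀ q (a₁ + n + 2) a₂ a₃ (a₄ + (2 * n + 2) * q₀) f + 1 := by
    rw [hv, nuF, nuF]; ring
  have digit_sum : a₁ + n + 2 + a₂ + a₃ + (a₄ + (2 * n + 2) * q₀) + f + 2 = q + (2 * n + 2) := by
    linarith
  have excess_lt : 2 * n + 2 < 2 * (a₁ + n + 2) := by omega
  have not_odd : ¬Odd (2 * n + 2) := Nat.not_odd_iff_even.2 (even_two_mul (n + 1))
  have index_eq := familyIndex_predDigits_of_eq_nuF_add_mul hq (by omega) (by omega) (by omega)
    (by omega) h₃ h₄ digit_sum shift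
  rwa [if_pos excess_lt, if_neg not_odd] at index_eq

theorem mapsTo_familyIndex_F5 (hq : q = 2 * q₀ ^ 2) :
    Set.MapsTo (familyIndex q₀ q ∘ predDigits q₀ q) (F5 q₀ q) {5} := by
  rintro v ⟨c, d, _, a₂, a₃, a₄, f, rfl, -, h₂, hcd, hd, h₃, h₄, hsum, hv⟩
  have shift : v = nuF q₀ q d (a₂ + c) (a₃ + d) (a₄ + (2 * d + c) * q₀) f + 1 := by
    rw [hv, nuF, nuF]; ring
  have digit_sum : d + (a₂ + c) + (a₃ + d) + (a₄ + (2 * d + c) * q₀) + f + 2 = q + (2 * d + c) := by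
    linarith
  have le_excess : 2 * d ≤ 2 * d + c := Nat.le_add_right _ _
  have index_eq := familyIndex_predDigits_of_eq_nuF_add_mul hq (by omega) (by omega) hd
    (by omega) (by omega) h₄ digit_sum shift
  rwa [if_neg le_excess.not_gt, if_pos (Nat.le_add_left d a₃)] at index_eq

theorem mapsTo_familyIndex_F6 (hq : q = 2 * q₀ ^ 2) :
    Set.MapsTo (familyIndex q₀ q ∘ predDigits q₀ q) (F6 q₀ q) {6} := by
  rintro v ⟨n, _, _, a₃, a₄, f, rfl, rfl, hn, h₃, h₄, hsum, hv⟩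
  have shift : v = nuF q₀ q (n + 1) 1 a₃ (a₄ + (2 * n + 2) * q₀) f + 1 := by
    rw [hv, nuF, nuF]; ring
  have digit_sum : n + 1 + 1 + a₃ + (a₄ + (2 * n + 2) * q₀) + f + 2 = q + (2 * n + 2) := by
    linarith
  have le_excess : 2 * (n + 1) ≤ 2 * n + 2 := le_rfl
  have a₃_lt : a₃ < n + 1 := Nat.lt_succ_of_le h₃
  have index_eq := familyIndex_predDigits_of_eq_nuF_add_mul hq (by omega) (by omega) (by omega)
    one_lt_two (by omega) h₄ digit_sum shift
  rwa [if_neg le_excess.not_gt, if_neg a₃_lt.not_ge] at index_eq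

end

theorem stmt_14_general (q₀ q : ℕ) (hq : q = 2 * q₀ ^ 2) :
    ([F1 q₀ q, F2 q₀ q, F3 q₀ q, F4 q₀ q, F5 q₀ q, F6 q₀ q] : List (Set ℕ)).Pairwise
      Disjoint := by
  refine pairwise_disjoint_of_forall₂_mapsTo (g := MixedDigits.familyIndex q₀ q ∘ predDigits q₀ q)
    (labels := [1, 2, 3, 4, 5, 6]) ?_ (by decide)
  exact .cons (mapsTo_familyIndex_F1 hq) <| .cons (mapsTo_familyIndex_F2 hq) <|
    .cons (mapsTo_familyIndex_F3 hq) <| .cons (mapsTo_familyIndex_F4 hq) <|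
    .cons (mapsTo_familyIndex_F5 hq) <| .cons (mapsTo_familyIndex_F6 hq) .nil

/-- The six sets `F₁, F₂, F₃, F₄, F₅, F₆` are pairwise disjoint. -/
theorem stmt_14 (s : ℕ) (hs : 1 ≤ s) (q₀ q : ℕ)
    (hq₀ : q₀ = 2 ^ s) (hq : q = 2 * q₀ ^ 2) :
    ([F1 q₀ q, F2 q₀ q, F3 q₀ q, F4 q₀ q, F5 q₀ q, F6 q₀ q] : List (Set ℕ)).Pairwise
      Disjoint :=
  stmt_14_general q₀ q hq
end

section
/- Let s ≥ 3 be an integer, q₀ = 2^s and q = 2q₀². For nonnegative integers a₁,a₂,a₃,a₄,f write σ = a₁+a₂+a₃+a₄+f and ν = a₁ + a₂q₀ + 2a₃q₀ + a₄q + fq², and let F₁ = {ν+1 : 0≤a₁≤q₀−1, 0≤a₂≤1, 0≤a₃≤q₀−1, a₄≥0, f≥0, σ≤q−2}. Then the cardinality of F₁ satisfies 24·|F₁| = 12q³ − 24q₀q² + 7q² − 2q, i.e. |F₁| = q³/2 − q₀q² + 7q²/24 − q/12. -/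
/-!
As soon as `2q₀² ≤ q`, the parameters are the digits of `ν` in the mixed radix system with place
values `1, q₀, 2q₀, q, q²`, so `|F₁|` is the number of admissible parameter tuples.
Fix `a₁` and `a₃` and put `n = q - 1 - a₁ - a₃`. The triples `(a₂, a₄, f)` with `a₂ ≤ 1` and
`a₂ + a₄ + f < n` are counted by two consecutive triangular numbers, whose sum is `n²`. Hence
`|F₁|` is the sum of `(q - 1 - a₁ - a₃)²` over `a₁, a₃ < q₀`.
-/

open Finset

theorem add_mul_lt_mul_of_lt {m n a c : ℕ} (ha : a < m) (hc : c < n) : a + m * c < m * n :=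
  calc a + m * c < m + m * c := Nat.add_lt_add_right ha _
    _ = m * (c + 1) := by ring
    _ ≤ m * n := Nat.mul_le_mul_left m hc

theorem add_mul_eq_add_mul_iff_of_lt {m a b c d : ℕ} (ha : a < m) (hb : b < m) :
    a + m * c = b + m * d ↔ a = b ∧ c = d := by
  refine ⟨fun h => ?_, by rintro ⟨rfl, rfl⟩; rfl⟩
  have hm : 0 < m := Nat.zero_lt_of_lt ha
  obtain ⟨hdiv, hmod⟩ := (Nat.div_mod_unique hm).2 ⟨h, ha⟩
  obtain ⟨hdiv', hmod'⟩ := (Nat.div_mod_unique hm).2 ⟨rfl, hb⟩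
  exact ⟨hmod.symm.trans hmod', hdiv.symm.trans hdiv'⟩

theorem nuF_eq_mixed_radix (q₀ q a₁ a₂ a₃ a₄ f : ℕ) :
    nuF q₀ q a₁ a₂ a₃ a₄ f = (a₁ + q₀ * (a₂ + 2 * a₃)) + q * (a₄ + q * f) := by
  unfold nuF
  ring

theorem nuF_eq_nuF_iff {q₀ q a₁ a₂ a₃ a₄ f b₁ b₂ b₃ b₄ g : ℕ} (hq : 2 * q₀ ^ 2 ≤ q)
    (ha₁ : a₁ < q₀) (ha₂ : a₂ < 2) (ha₃ : a₃ < q₀) (ha₄ : a₄ < q)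
    (hb₁ : b₁ < q₀) (hb₂ : b₂ < 2) (hb₃ : b₃ < q₀) (hb₄ : b₄ < q) :
    nuF q₀ q a₁ a₂ a₃ a₄ f = nuF q₀ q b₁ b₂ b₃ b₄ g ↔
      a₁ = b₁ ∧ a₂ = b₂ ∧ a₃ = b₃ ∧ a₄ = b₄ ∧ f = g := by
  have low_lt {c₁ c₂ c₃ : ℕ} (h₁ : c₁ < q₀) (h₂ : c₂ < 2) (h₃ : c₃ < q₀) :
      c₁ + q₀ * (c₂ + 2 * c₃) < q :=
    calc c₁ + q₀ * (c₂ + 2 * c₃)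
      _ < q₀ * (2 * q₀) := add_mul_lt_mul_of_lt h₁ (add_mul_lt_mul_of_lt h₂ h₃)
      _ = 2 * q₀ ^ 2 := by ring
      _ ≤ q := hq
  rw [nuF_eq_mixed_radix, nuF_eq_mixed_radix,
    add_mul_eq_add_mul_iff_of_lt (low_lt ha₁ ha₂ ha₃) (low_lt hb₁ hb₂ hb₃),
    add_mul_eq_add_mul_iff_of_lt ha₁ hb₁, add_mul_eq_add_mul_iff_of_lt ha₂ hb₂,
    add_mul_eq_add_mul_iff_of_lt ha₄ hb₄, and_assoc, and_assoc]

/-- The triples `(a₂, a₄, f)` with `a₂ ≤ 1` and `a₂ + a₄ + f < n`, encoded as `⟨(a₂, a₄), f⟩`. -/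
def upperDigits (n : ℕ) : Finset (Σ _ : ℕ × ℕ, ℕ) :=
  (range 2 ×ˢ range n).sigma fun d => range (n - (d.1 + d.2))

/-- The tuples over which `F₁` is parametrized, encoded as `⟨(a₁, a₃), ⟨(a₂, a₄), f⟩⟩`. The
condition `σ ≤ q - 2` is expressed as `a₂ + a₄ + f < q - 1 - (a₁ + a₃)`. -/
def digitTuples (q₀ q : ℕ) : Finset (Σ _ : ℕ × ℕ, Σ _ : ℕ × ℕ, ℕ) :=
  (range q₀ ×ˢ range q₀).sigma fun d => upperDigits (q - 1 - (d.1 + d.2))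

/-- The element `ν + 1` of `F₁` given by a tuple in the encoding of `digitTuples`. -/
def digitValue (q₀ q : ℕ) (x : Σ _ : ℕ × ℕ, Σ _ : ℕ × ℕ, ℕ) : ℕ :=
  nuF q₀ q x.1.1 x.2.1.1 x.1.2 x.2.1.2 x.2.2 + 1

theorem mem_digitTuples {q₀ q a₁ a₂ a₃ a₄ f : ℕ} :
    ⟨(a₁, a₃), ⟨(a₂, a₄), f⟩⟩ ∈ digitTuples q₀ q ↔
      a₁ < q₀ ∧ a₂ < 2 ∧ a₃ < q₀ ∧ a₁ + a₂ + a₃ + a₄ + f + 2 ≤ q := by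
  simp only [digitTuples, upperDigits, mem_sigma, mem_product, mem_range]
  omega

theorem F1_eq_image_digitValue (q₀ q : ℕ) :
    F1 q₀ q = Set.image (digitValue q₀ q) (digitTuples q₀ q) := by
  ext v
  constructor
  · rintro ⟨a₁, a₂, a₃, a₄, f, h₁, h₂, h₃, hσ, rfl⟩
    exact ⟨⟨(a₁, a₃), ⟨(a₂, a₄), f⟩⟩, mem_digitTuples.2 ⟨h₁, Nat.lt_succ_of_le h₂, h₃, hσ⟩, rfl⟩
  · rintro ⟨⟨⟨a₁, a₃⟩, ⟨⟨a₂, a₄⟩, f⟩⟩, h, rfl⟩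
    obtain ⟨h₁, h₂, h₃, hσ⟩ := mem_digitTuples.1 h
    exact ⟨a₁, a₂, a₃, a₄, f, h₁, Nat.le_of_lt_succ h₂, h₃, hσ, rfl⟩

theorem injOn_digitValue {q₀ q : ℕ} (hq : 2 * q₀ ^ 2 ≤ q) :
    Set.InjOn (digitValue q₀ q) (digitTuples q₀ q) := by
  rintro ⟨⟨a₁, a₃⟩, ⟨⟨a₂, a₄⟩, f⟩⟩ ha ⟨⟨b₁, b₃⟩, ⟨⟨b₂, b₄⟩, g⟩⟩ hb hval
  obtain ⟨ha₁, ha₂, ha₃, haσ⟩ := mem_digitTuples.1 ha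
  obtain ⟨hb₁, hb₂, hb₃, hbσ⟩ := mem_digitTuples.1 hb
  have ha₄ : a₄ < q := by omega
  have hb₄ : b₄ < q := by omega
  obtain ⟨rfl, rfl, rfl, rfl, rfl⟩ :=
    (nuF_eq_nuF_iff hq ha₁ ha₂ ha₃ ha₄ hb₁ hb₂ hb₃ hb₄).1 (Nat.succ_injective hval)
  rfl

theorem ncard_F1_eq_card_digitTuples {q₀ q : ℕ} (hq : 2 * q₀ ^ 2 ≤ q) :
    (F1 q₀ q).ncard = #(digitTuples q₀ q) := by
  rw [F1_eq_image_digitValue, (injOn_digitValue hq).ncard_image, Set.ncard_coe_finset]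

theorem card_upperDigits (n : ℕ) : #(upperDigits n) = n ^ 2 := by
  have sum_sub : ∑ a ∈ range n, (n - a) = ∑ a ∈ range n, (a + 1) := by
    rw [← sum_range_reflect]
    refine sum_congr rfl fun a ha => ?_
    have := mem_range.1 ha
    omega
  have sum_sub_one : ∑ a ∈ range n, (n - (1 + a)) = ∑ a ∈ range n, a := by
    simpa only [Nat.sub_sub] using sum_range_reflect (fun a => a) n
  calc #(upperDigits n)
    _ = ∑ a ∈ range n, (n - a) + ∑ a ∈ range n, (n - (1 + a)) := by
      simp [upperDigits, card_sigma, sum_product, sum_range_succ]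
    _ = (∑ a ∈ range n, a) * 2 + n := by
      rw [sum_sub, sum_sub_one, sum_add_distrib, sum_const, card_range, smul_eq_mul]
      ring
    _ = n ^ 2 := by
      rw [sum_range_id_mul_two, Nat.mul_sub_one, Nat.sub_add_cancel (Nat.le_mul_self n), sq]

theorem card_digitTuples (q₀ q : ℕ) :
    #(digitTuples q₀ q) = ∑ i ∈ range q₀, ∑ j ∈ range q₀, (q - 1 - (i + j)) ^ 2 := by
  simp only [digitTuples, card_sigma, card_upperDigits, sum_product]

section PowerSums

variable {R : Type*} [CommRing R]

theorem two_mul_sum_range_sub (x : R) (n : ℕ) :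
    2 * ∑ i ∈ range n, (x - i) = n * (2 * x - (n - 1)) := by
  induction n with
  | zero => simp
  | succ n ih =>
    rw [sum_range_succ, mul_add, ih]
    push_cast
    ring

theorem six_mul_sum_range_sub_sq (x : R) (n : ℕ) :
    6 * ∑ i ∈ range n, (x - i) ^ 2 = n * (6 * x ^ 2 - 6 * x * (n - 1) + (n - 1) * (2 * n - 1)) := by
  induction n with
  | zero => simp
  | succ n ih =>
    rw [sum_range_succ, mul_add, ih]
    push_cast
    ring

theorem six_mul_sum_range_sum_range_sub_sq (x : R) (n : ℕ) :
    6 * ∑ i ∈ range n, ∑ j ∈ range n, (x - (i + j)) ^ 2 =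
      n ^ 2 * (6 * (x + 1 - n) ^ 2 + n ^ 2 - 1) := by
  have inner (i : ℕ) : 6 * ∑ j ∈ range n, (x - (i + j)) ^ 2 =
      n * (6 * (x - i) ^ 2 - 6 * (n - 1) * (x - i) + (n - 1) * (2 * n - 1)) := by
    simp only [← sub_sub, six_mul_sum_range_sub_sq]
    ring
  rw [mul_sum, sum_congr rfl fun i _ => inner i, ← mul_sum, sum_add_distrib, sum_sub_distrib,
    ← mul_sum, ← mul_sum, sum_const, card_range, nsmul_eq_mul]
  linear_combination n * six_mul_sum_range_sub_sq x n -
    3 * n * (n - 1) * two_mul_sum_range_sub x n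

end PowerSums

theorem cast_cubic_of_eq_two_mul_sq {q₀ q : ℕ} (hq : q = 2 * q₀ ^ 2) :
    ((12 * q ^ 3 - 24 * q₀ * q ^ 2 + 7 * q ^ 2 - 2 * q : ℕ) : ℤ) =
      4 * (q₀ ^ 2 * (6 * (q - q₀) ^ 2 + q₀ ^ 2 - 1)) := by
  have two_mul_le : 2 * q₀ ≤ q := hq ▸ Nat.mul_le_mul_left 2 (Nat.le_self_pow two_ne_zero q₀)
  have cubic_dominates : 24 * q₀ * q ^ 2 ≤ 12 * q ^ 3 :=
    calc 24 * q₀ * q ^ 2 = 12 * (2 * q₀) * q ^ 2 := by ring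
      _ ≤ 12 * q * q ^ 2 := by gcongr
      _ = 12 * q ^ 3 := by ring
  have quadratic_dominates : 2 * q ≤ 7 * q ^ 2 :=
    Nat.mul_le_mul (by norm_num) (Nat.le_self_pow two_ne_zero q)
  rw [Nat.add_sub_assoc quadratic_dominates]
  push_cast [cubic_dominates, quadratic_dominates]
  have hq_cast : (q : ℤ) = 2 * q₀ ^ 2 := mod_cast hq
  rw [hq_cast]
  ring

theorem stmt_16_general {q₀ q : ℕ} (hq : 2 * q₀ ^ 2 ≤ q) :
    6 * ((F1 q₀ q).ncard : ℤ) = q₀ ^ 2 * (6 * (q - q₀) ^ 2 + q₀ ^ 2 - 1) := by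
  have cast_term {i j : ℕ} (hi : i < q₀) (hj : j < q₀) :
      ((q - 1 - (i + j) : ℕ) : ℤ) = (q - 1 : ℤ) - (i + j) := by
    have : q₀ ≤ q₀ ^ 2 := Nat.le_self_pow two_ne_zero q₀
    omega
  have cast_card : ((F1 q₀ q).ncard : ℤ) =
      ∑ i ∈ range q₀, ∑ j ∈ range q₀, ((q - 1 : ℤ) - (i + j)) ^ 2 := by
    rw [ncard_F1_eq_card_digitTuples hq, card_digitTuples]
    push_cast
    exact sum_congr rfl fun i hi => sum_congr rfl fun j hj => by
      rw [cast_term (mem_range.1 hi) (mem_range.1 hj)]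
  rw [cast_card, six_mul_sum_range_sum_range_sub_sq, sub_add_cancel]

/-- For `s ≥ 3`, the cardinality of `F₁` satisfies
`24·|F₁| = 12q³ − 24q₀q² + 7q² − 2q`, i.e. `|F₁| = q³/2 − q₀q² + 7q²/24 − q/12`. -/
theorem stmt_16 (s : ℕ) (hs : 3 ≤ s) (q₀ q : ℕ)
    (hq₀ : q₀ = 2 ^ s) (hq : q = 2 * q₀ ^ 2) :
    24 * (F1 q₀ q).ncard = 12 * q ^ 3 - 24 * q₀ * q ^ 2 + 7 * q ^ 2 - 2 * q := by
  zify
  linear_combination 4 * stmt_16_general hq.ge - cast_cubic_of_eq_two_mul_sq hq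
end

section
/- Let s ≥ 3 be an integer, q₀ = 2^s and q = 2q₀². For nonnegative integers a₁,a₂,a₃,a₄,f write σ = a₁+a₂+a₃+a₄+f and ν = a₁ + a₂q₀ + 2a₃q₀ + a₄q + fq², and let F₂ = {ν+(n+1)q₀q+1 : 1≤n≤2q₀−2, 0≤a₁≤q₀−1, 0≤a₂≤1, 0≤a₃≤q₀−1, 0≤a₄≤q−q₀−1−nq₀, f≥0, σ=q−q₀−2−nq₀+n}. Then the cardinality of F₂ satisfies 24·|F₂| = 24q₀q² − 43q² + 24q₀q + 2q + 24, i.e. |F₂| = q₀q² − 43q²/24 + q₀q + q/12 + 1. -/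
/-!
Since `q = 2q₀²`, an element of `F₂` minus one has the mixed-radix expansion with digits `a₁ < q₀`,
`a₂ < 2`, `a₃ < q₀`, `M = a₄ + (n+1)q₀ < q` and leading part `f`. As the condition on `σ` reads
`a₁ + a₂ + a₃ + M + f + 2 = q + n`, the digits determine `n`, so distinct parameters give distinct
elements. It remains to count parameters. For `w = a₁ + a₂ + a₃` and `n = k + 1` there are
`q₀(N - k) - max(w - k, 0)` values of `a₄`, where `N = 2q₀ - 2`; the sum over `k < N` is
`q₀ * C(N+1, 2) - C(w+1, 2)`, except that `w = N + 1`, which occurs once, gives one more.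
The sum of `C(w+1, 2)` over all `(a₁, a₂, a₃)` follows from the hockey-stick identity.
-/

open Finset

lemma sum_range_choose_add (m r N : ℕ) :
    ∑ i ∈ range N, (m + i).choose r + m.choose (r + 1) = (m + N).choose (r + 1) := by
  induction N with
  | zero => simp
  | succ N ih => rw [sum_range_succ, ← add_assoc m, Nat.choose_succ_succ' (m + N)]; omega

lemma sum_range_sum_range_choose_add (m r L N : ℕ) :
    ∑ i ∈ range L, ∑ j ∈ range N, (m + i + j).choose r
        + (m + L).choose (r + 2) + (m + N).choose (r + 2)
      = (m + L + N).choose (r + 2) + m.choose (r + 2) := by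
  have inner : ∑ i ∈ range L, ∑ j ∈ range N, (m + i + j).choose r
        + ∑ i ∈ range L, (m + i).choose (r + 1)
      = ∑ i ∈ range L, (m + N + i).choose (r + 1) := by
    rw [← sum_add_distrib]
    exact sum_congr rfl fun i _ => by rw [sum_range_choose_add, add_right_comm]
  have outer := sum_range_choose_add m (r + 1) L
  have outer_shifted := sum_range_choose_add (m + N) (r + 1) L
  rw [add_right_comm m N L] at outer_shifted
  lia

lemma sum_range_tsub_add_choose_two (w N : ℕ) :
    ∑ k ∈ range N, (w - k) + (w - N + 1).choose 2 = (w + 1).choose 2 := by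
  induction N with
  | zero => simp
  | succ N ih =>
    have pascal : (w - N + 1).choose 2 = (w - N) + (w - (N + 1) + 1).choose 2 := by
      rcases Nat.lt_or_ge N w with h | h
      · rw [Nat.choose_succ_succ' (w - N), Nat.choose_one_right,
          show w - (N + 1) + 1 = w - N by omega]
      · simp [Nat.sub_eq_zero_of_le h, Nat.sub_eq_zero_of_le (h.trans N.le_succ)]
    rw [sum_range_succ]
    omega

lemma sum_range_mul_tsub_tsub_add_choose_two {c w N : ℕ} (hc : 2 ≤ c) (hw : w ≤ N + 1) :
    ∑ k ∈ range N, (c * (N - k) - (w - k)) + (w + 1).choose 2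
      = c * (N + 1).choose 2 + (w - N + 1).choose 2 := by
  have no_truncation : ∀ k ∈ range N, c * (N - k) - (w - k) + (w - k) = c * (N - k) := by
    intro k hk
    have : 2 * (N - k) ≤ c * (N - k) := Nat.mul_le_mul_right _ hc
    have := mem_range.1 hk
    omega
  have linear : ∑ k ∈ range N, (N - k) = (N + 1).choose 2 := by
    simpa using sum_range_tsub_add_choose_two N N
  rw [← sum_range_tsub_add_choose_two w N, ← add_assoc, ← sum_add_distrib,
    sum_congr rfl no_truncation, ← mul_sum, linear]

lemma twelve_mul_choose_four_add_choose_four (n : ℕ) :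
    12 * ((n + 1).choose 4 + (n + 2).choose 4) + n ^ 2 = n ^ 4 := by
  have cast_choose_four (m : ℕ) : (m.choose 4 : ℚ) = m * (m - 1) * (m - 2) * (m - 3) / 24 := by
    rw [Nat.cast_choose_eq_descPochhammer_div]
    simp [descPochhammer_succ_right, Nat.factorial]
  qify
  rw [cast_choose_four, cast_choose_four]
  push_cast
  ring

/-- The admissible triples `(a₁, a₂, a₃)`: the three lowest digits of an element of `F₂` minus one
in the mixed radix `q₀, 2, q₀`. -/
def digitTriples (q₀ : ℕ) : Finset (ℕ × ℕ × ℕ) :=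
  range q₀ ×ˢ range 2 ×ˢ range q₀

/-- The contribution `a₁ + a₂ + a₃` of a digit triple to `σ`. -/
def digitSum (t : ℕ × ℕ × ℕ) : ℕ :=
  t.1 + t.2.1 + t.2.2

lemma six_mul_sum_choose_digitSum (q₀ : ℕ) :
    6 * ∑ t ∈ digitTriples q₀, (digitSum t + 1).choose 2 + q₀ ^ 2 = 7 * q₀ ^ 4 := by
  have split_middle_digit : ∑ t ∈ digitTriples q₀, (digitSum t + 1).choose 2
      = ∑ i ∈ range q₀, ∑ j ∈ range q₀, (1 + i + j).choose 2
        + ∑ i ∈ range q₀, ∑ j ∈ range q₀, (2 + i + j).choose 2 := by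
    simp only [digitTriples, digitSum, sum_product, sum_range_succ, sum_range_zero, zero_add,
      sum_add_distrib]
    congr! 4 <;> omega
  have low := sum_range_sum_range_choose_add 1 2 q₀ q₀
  have high := sum_range_sum_range_choose_add 2 2 q₀ q₀
  have pyramid := twelve_mul_choose_four_add_choose_four q₀
  have pyramid_double := twelve_mul_choose_four_add_choose_four (2 * q₀)
  have base_terms_vanish : Nat.choose 1 4 = 0 ∧ Nat.choose 2 4 = 0 := by decide
  lia

lemma sum_choose_digitSum_tsub {q₀ : ℕ} (hq₀ : 1 ≤ q₀) :
    ∑ t ∈ digitTriples q₀, (digitSum t - (2 * q₀ - 2) + 1).choose 2 = 1 := by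
  have top_mem : (q₀ - 1, 1, q₀ - 1) ∈ digitTriples q₀ := by
    simp only [digitTriples, mem_product, mem_range]; omega
  rw [sum_eq_single_of_mem _ top_mem]
  · simp [digitSum, show q₀ - 1 + 1 + (q₀ - 1) - (2 * q₀ - 2) = 1 by omega]
  · rintro ⟨a₁, a₂, a₃⟩ ht hne
    simp only [digitTriples, mem_product, mem_range, ne_eq, Prod.mk.injEq] at ht hne
    have : digitSum (a₁, a₂, a₃) - (2 * q₀ - 2) = 0 := by simp only [digitSum]; omega
    simp [this]

/-- The constraints on the parameters in the definition of `F₂`, the last two written in terms of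
the digit `M = a₄ + (n+1)q₀`. -/
structure Admissible (q₀ q n a₁ a₂ a₃ a₄ f : ℕ) : Prop where
  one_le_n : 1 ≤ n
  n_le : n + 2 ≤ 2 * q₀
  a₁_lt : a₁ < q₀
  a₂_lt : a₂ < 2
  a₃_lt : a₃ < q₀
  a₄_lt : a₄ + (n + 1) * q₀ < q
  sigma_eq : a₁ + a₂ + a₃ + (a₄ + (n + 1) * q₀) + f + 2 = q + n

lemma mem_F2_iff {q₀ q v : ℕ} :
    v ∈ F2 q₀ q ↔ ∃ n a₁ a₂ a₃ a₄ f, Admissible q₀ q n a₁ a₂ a₃ a₄ f ∧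
      v = nuF q₀ q a₁ a₂ a₃ a₄ f + (n + 1) * q₀ * q + 1 := by
  constructor
  · rintro ⟨n, a₁, a₂, a₃, a₄, f, h₁, h₂, h₃, h₄, h₅, h₆, h₇, rfl⟩
    exact ⟨n, a₁, a₂, a₃, a₄, f, ⟨h₁, h₂, h₃, by omega, h₅, by linarith, by linarith⟩, rfl⟩
  · rintro ⟨n, a₁, a₂, a₃, a₄, f, ⟨h₁, h₂, h₃, h₄, h₅, h₆, h₇⟩, rfl⟩
    exact ⟨n, a₁, a₂, a₃, a₄, f, h₁, h₂, h₃, by omega, h₅, by linarith, by linarith, rfl⟩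

lemma eq_and_eq_of_add_mul_eq {d x y x' y' : ℕ} (hx : x < d) (hx' : x' < d)
    (h : x + d * y = x' + d * y') : x = x' ∧ y = y' := by
  have hd : 0 < d := by omega
  constructor
  · simpa [Nat.mod_eq_of_lt, hx, hx'] using congrArg (· % d) h
  · simpa [Nat.add_mul_div_left, Nat.div_eq_of_lt, hx, hx', hd] using congrArg (· / d) h

lemma nuF_add_eq_mixed_radix (q₀ n a₁ a₂ a₃ a₄ f : ℕ) :
    nuF q₀ (2 * q₀ ^ 2) a₁ a₂ a₃ a₄ f + (n + 1) * q₀ * (2 * q₀ ^ 2)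
      = a₁ + q₀ * (a₂ + 2 * (a₃ + q₀ * ((a₄ + (n + 1) * q₀) + 2 * q₀ ^ 2 * f))) := by
  rw [nuF]; ring

lemma Admissible.eq_of_value_eq {q₀ n a₁ a₂ a₃ a₄ f n' a₁' a₂' a₃' a₄' f' : ℕ}
    (h : Admissible q₀ (2 * q₀ ^ 2) n a₁ a₂ a₃ a₄ f)
    (h' : Admissible q₀ (2 * q₀ ^ 2) n' a₁' a₂' a₃' a₄' f')
    (hv : nuF q₀ (2 * q₀ ^ 2) a₁ a₂ a₃ a₄ f + (n + 1) * q₀ * (2 * q₀ ^ 2)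
      = nuF q₀ (2 * q₀ ^ 2) a₁' a₂' a₃' a₄' f' + (n' + 1) * q₀ * (2 * q₀ ^ 2)) :
    (n, a₁, a₂, a₃, a₄) = (n', a₁', a₂', a₃', a₄') := by
  rw [nuF_add_eq_mixed_radix, nuF_add_eq_mixed_radix] at hv
  obtain ⟨rfl, hv₂⟩ := eq_and_eq_of_add_mul_eq h.a₁_lt h'.a₁_lt hv
  obtain ⟨rfl, hv₃⟩ := eq_and_eq_of_add_mul_eq h.a₂_lt h'.a₂_lt hv₂
  obtain ⟨rfl, hv₄⟩ := eq_and_eq_of_add_mul_eq h.a₃_lt h'.a₃_lt hv₃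
  obtain ⟨hM, rfl⟩ := eq_and_eq_of_add_mul_eq h.a₄_lt h'.a₄_lt hv₄
  obtain rfl : n = n' := by have := h.sigma_eq; have := h'.sigma_eq; omega
  obtain rfl : a₄ = a₄' := by omega
  rfl

/-- The parameters left after solving the condition on `σ` for `f`: a digit triple, `k = n - 1`
and `a₄`. The truncated subtraction `digitSum p.1 - p.2` is intended: `f ≥ 0` cuts down the range
of `a₄` only when `k < a₁ + a₂ + a₃`. -/
def freeParams (q₀ : ℕ) : Finset (Σ _ : (ℕ × ℕ × ℕ) × ℕ, ℕ) :=
  (digitTriples q₀ ×ˢ range (2 * q₀ - 2)).sigma fun p =>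
    range (q₀ * (2 * q₀ - 2 - p.2) - (digitSum p.1 - p.2))

/-- The value of `f` prescribed by the condition on `σ`, for `w = a₁ + a₂ + a₃`. The
subtraction does not truncate on `freeParams`. -/
def solvedF (q₀ w n a₄ : ℕ) : ℕ :=
  2 * q₀ ^ 2 + n - (w + a₄ + (n + 1) * q₀ + 2)

/-- The element of `F₂` with the given free parameters. -/
def freeParamsValue (q₀ : ℕ) (x : Σ _ : (ℕ × ℕ × ℕ) × ℕ, ℕ) : ℕ :=
  nuF q₀ (2 * q₀ ^ 2) x.1.1.1 x.1.1.2.1 x.1.1.2.2 x.2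
      (solvedF q₀ (digitSum x.1.1) (x.1.2 + 1) x.2)
    + (x.1.2 + 1 + 1) * q₀ * (2 * q₀ ^ 2) + 1

lemma admissible_succ_iff {q₀ k a₁ a₂ a₃ a₄ f : ℕ} :
    Admissible q₀ (2 * q₀ ^ 2) (k + 1) a₁ a₂ a₃ a₄ f ↔
      ⟨((a₁, a₂, a₃), k), a₄⟩ ∈ freeParams q₀ ∧
        f = solvedF q₀ (digitSum (a₁, a₂, a₃)) (k + 1) a₄ := by
  have complement (hk : k + 3 ≤ 2 * q₀) :
      q₀ * (2 * q₀ - 2 - k) + (k + 1 + 1) * q₀ = 2 * q₀ ^ 2 := by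
    rw [mul_comm (k + 1 + 1), ← mul_add, show 2 * q₀ - 2 - k + (k + 1 + 1) = 2 * q₀ by omega]; ring
  simp only [freeParams, digitTriples, digitSum, solvedF, mem_sigma, mem_product, mem_range]
  constructor
  · rintro ⟨-, hk, h₁, h₂, h₃, h₄, hσ⟩
    have := complement hk
    exact ⟨⟨⟨⟨h₁, h₂, h₃⟩, by omega⟩, by omega⟩, by omega⟩
  · rintro ⟨⟨⟨⟨h₁, h₂, h₃⟩, hk⟩, h₄⟩, rfl⟩
    have := complement (by omega)
    exact ⟨by omega, by omega, h₁, h₂, h₃, by omega, by omega⟩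

lemma F2_eq_image_freeParamsValue (q₀ : ℕ) :
    F2 q₀ (2 * q₀ ^ 2) = freeParamsValue q₀ '' freeParams q₀ := by
  ext v
  rw [mem_F2_iff]
  constructor
  · rintro ⟨n, a₁, a₂, a₃, a₄, f, h, rfl⟩
    obtain ⟨k, rfl⟩ := Nat.exists_eq_add_of_le' h.one_le_n
    obtain ⟨hmem, rfl⟩ := admissible_succ_iff.1 h
    exact ⟨_, hmem, rfl⟩
  · rintro ⟨⟨⟨⟨a₁, a₂, a₃⟩, k⟩, a₄⟩, hmem, rfl⟩
    exact ⟨k + 1, a₁, a₂, a₃, a₄, _, admissible_succ_iff.2 ⟨hmem, rfl⟩, rfl⟩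

lemma injOn_freeParamsValue (q₀ : ℕ) : Set.InjOn (freeParamsValue q₀) (freeParams q₀) := by
  rintro ⟨⟨⟨a₁, a₂, a₃⟩, k⟩, a₄⟩ hx ⟨⟨⟨a₁', a₂', a₃'⟩, k'⟩, a₄'⟩ hx' hv
  have := (admissible_succ_iff.2 ⟨hx, rfl⟩).eq_of_value_eq (admissible_succ_iff.2 ⟨hx', rfl⟩)
    (Nat.succ_injective hv)
  simp_all

lemma ncard_F2 (q₀ : ℕ) : (F2 q₀ (2 * q₀ ^ 2)).ncard = #(freeParams q₀) := by
  rw [F2_eq_image_freeParamsValue, (injOn_freeParamsValue q₀).ncard_image,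
    Set.ncard_coe_finset]

lemma card_freeParams_add_sum_choose {q₀ : ℕ} (hq₀ : 2 ≤ q₀) :
    #(freeParams q₀) + ∑ t ∈ digitTriples q₀, (digitSum t + 1).choose 2
      = 2 * q₀ ^ 3 * (2 * q₀ - 1).choose 2 + 1 := by
  have digitSum_le : ∀ t ∈ digitTriples q₀, digitSum t ≤ 2 * q₀ - 2 + 1 := by
    rintro ⟨a₁, a₂, a₃⟩ ht
    simp only [digitTriples, digitSum, mem_product, mem_range] at ht ⊢
    omega
  have card_digitTriples : #(digitTriples q₀) = 2 * q₀ ^ 2 := by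
    simp only [digitTriples, card_product, card_range]; ring
  calc #(freeParams q₀) + ∑ t ∈ digitTriples q₀, (digitSum t + 1).choose 2
      = ∑ t ∈ digitTriples q₀, (∑ k ∈ range (2 * q₀ - 2),
          (q₀ * (2 * q₀ - 2 - k) - (digitSum t - k)) + (digitSum t + 1).choose 2) := by
        simp only [freeParams, card_sigma, card_range, sum_product, sum_add_distrib]
    _ = ∑ t ∈ digitTriples q₀, (q₀ * (2 * q₀ - 2 + 1).choose 2
          + (digitSum t - (2 * q₀ - 2) + 1).choose 2) :=
        sum_congr rfl fun t ht =>
          sum_range_mul_tsub_tsub_add_choose_two hq₀ (digitSum_le t ht)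
    _ = 2 * q₀ ^ 3 * (2 * q₀ - 1).choose 2 + 1 := by
        rw [sum_add_distrib, sum_choose_digitSum_tsub (by omega), sum_const, card_digitTriples,
          smul_eq_mul, show 2 * q₀ - 2 + 1 = 2 * q₀ - 1 by omega]
        ring

theorem stmt_17_general {q₀ q : ℕ} (hq₀ : 2 ≤ q₀) (hq : q = 2 * q₀ ^ 2) :
    24 * (F2 q₀ q).ncard = 24 * q₀ * q ^ 2 - 43 * q ^ 2 + 24 * q₀ * q + 2 * q + 24 := by
  subst hq
  have no_truncation : 43 * (2 * q₀ ^ 2) ^ 2 ≤ 24 * q₀ * (2 * q₀ ^ 2) ^ 2 :=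
    Nat.mul_le_mul_right _ (by omega)
  have card_eq := card_freeParams_add_sum_choose hq₀
  have sum_eq := six_mul_sum_choose_digitSum q₀
  rw [ncard_F2]
  qify [no_truncation] at card_eq sum_eq ⊢
  rw [Nat.cast_choose_two, Nat.cast_sub (by omega)] at card_eq
  push_cast at card_eq
  linear_combination 24 * card_eq - 4 * sum_eq

/-- For `s ≥ 3`, the cardinality of `F₂` satisfies
`24·|F₂| = 24q₀q² − 43q² + 24q₀q + 2q + 24`, i.e.
`|F₂| = q₀q² − 43q²/24 + q₀q + q/12 + 1`. -/
theorem stmt_17 (s : ℕ) (hs : 3 ≤ s) (q₀ q : ℕ)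
    (hq₀ : q₀ = 2 ^ s) (hq : q = 2 * q₀ ^ 2) :
    24 * (F2 q₀ q).ncard = 24 * q₀ * q ^ 2 - 43 * q ^ 2 + 24 * q₀ * q + 2 * q + 24 := by
  exact stmt_17_general (hq₀ ▸ Nat.pow_le_pow_right two_pos (by omega : 1 ≤ s)) hq
end
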